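/- arXiv:2105.01751 — 13 statements merged into one kernel-verified Lean document; each statement's English description precedes it below -/
import Mathlib

section
/- Let F be a field and k ≥ 2. Let C = T_1 + ⋯ + T_k be a set-multilinear ΣΠΣ(k) circuit with respect to a partition X = X_1 ⊔ ⋯ ⊔ X_d. Suppose C is simple (gcd(T_1,…,T_k) = 1), minimal (for every nonempty proper subset U ⊊ {1,…,k}, Σ_{i∈U} T_i ≠ 0), and computes the zero polynomial (T_1 + ⋯ + T_k = 0). Then deg(T_i) ≤ k − 2 for every i ∈ {1,…,k}; equivalently, d ≤ k − 2. -/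
open MvPolynomial

section Helpers

open Module Submodule

/-- The family `u` is connected (does not split). -/
def Conn (F : Type*) {ι U : Type*} [Field F] [AddCommGroup U] [Module F U]
    [Fintype ι] (u : ι → U) : Prop :=
  ∀ S : Finset ι, S.Nonempty → S ≠ Finset.univ →
    ∃ a : ι → F, ∑ i, a i • u i = 0 ∧ ∑ i ∈ S, a i • u i ≠ 0

/-- rank of the subfamily on `S` -/
noncomputable def rk (F : Type*) {ι U : Type*} [Field F] [AddCommGroup U] [Module F U]
    (u : ι → U) (S : Finset ι) : ℕ := finrank F (span F (u '' (S : Set ι)))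

variable {F ι U : Type*} [Field F] [AddCommGroup U] [Module F U]

lemma span_union_image [DecidableEq ι] (u : ι → U) (S C : Finset ι) :
    span F (u '' ((S ∪ C : Finset ι) : Set ι)) =
      span F (u '' (S : Set ι)) ⊔ span F (u '' (C : Set ι)) := by
  rw [Finset.coe_union, Set.image_union, span_union]

lemma rk_singleton (u : ι → U) {e : ι} (h : u e ≠ 0) : rk F u {e} = 1 := by
  have : u '' (({e} : Finset ι) : Set ι) = {u e} := by simp
  rw [rk, this, finrank_span_singleton h]

lemma finrank_sup_le_map [FiniteDimensional F U] (W Z : Submodule F U) :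
    finrank F ↥(W ⊔ Z) ≤ finrank F W + finrank F (Z.map W.mkQ) := by
  have h := LinearMap.finrank_range_add_finrank_ker (W.mkQ.domRestrict (W ⊔ Z))
  have h1 : LinearMap.range (W.mkQ.domRestrict (W ⊔ Z)) = Z.map W.mkQ := by
    rw [LinearMap.range_domRestrict, Submodule.map_sup]
    simp
  have h2 : finrank F (LinearMap.ker (W.mkQ.domRestrict (W ⊔ Z))) ≤ finrank F W := by
    rw [LinearMap.ker_domRestrict, Submodule.ker_mkQ]
    rw [← Submodule.finrank_map_subtype_eq]
    exact Submodule.finrank_mono (Submodule.map_comap_le _ _)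
  rw [h1] at h
  omega

/-- Rank of a tensor-like ear. -/
lemma ear_t [Fintype ι] [DecidableEq ι] [FiniteDimensional F U] (t : ι → U) (S C : Finset ι)
    (hSC : Disjoint S C) (c0 : ι) (hc0 : c0 ∈ C) (a : ι → F)
    (ha : ∑ i ∈ S ∪ C, a i • t i = 0) (haS : ∑ i ∈ S, a i • t i ≠ 0)
    (hmin : ∀ c ∈ C, ∀ b : ι → F, ∑ i ∈ S ∪ C.erase c, b i • t i = 0 →
      ∑ i ∈ S, b i • t i = 0) :
    rk F t S + C.card ≤ rk F t (S ∪ C) + 1 := by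
  have hD : Disjoint S (C.erase c0) := hSC.mono_right (Finset.erase_subset _ _)
  have key : ∀ b : ι → F, ∑ i ∈ S ∪ C.erase c0, b i • t i = 0 → ∀ i ∈ C.erase c0, b i = 0 := by
    intro b hb i1 hi1
    have hS := hmin c0 hc0 b hb
    rw [Finset.sum_union hD, hS, zero_add] at hb
    by_contra hne
    apply haS
    have hi1C : i1 ∈ C := Finset.mem_of_mem_erase hi1
    let a' : ι → F := fun i => a i - if i ∈ C.erase c0 then (a i1 / b i1) * b i else 0
    have hS' : ∑ i ∈ S, a' i • t i = ∑ i ∈ S, a i • t i := by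
      refine Finset.sum_congr rfl fun i hi => ?_
      have : i ∉ C.erase c0 := Finset.disjoint_left.mp hD hi
      simp only [a', if_neg this, sub_zero]
    rw [← hS']
    apply hmin i1 hi1C
    have hC' : ∑ i ∈ C, a' i • t i = ∑ i ∈ C, a i • t i := by
      simp only [a', sub_smul, Finset.sum_sub_distrib, sub_eq_self, ite_smul, zero_smul]
      rw [← Finset.sum_filter, Finset.filter_mem_eq_inter,
        Finset.inter_eq_right.mpr (Finset.erase_subset _ _)]
      simp only [mul_smul]
      rw [← Finset.smul_sum, hb, smul_zero]
    have h0 : a' i1 = 0 := by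
      simp only [a', if_pos hi1]
      field_simp
      simp
    rw [Finset.sum_union (hSC.mono_right (Finset.erase_subset _ _)), hS',
      Finset.sum_erase _ (by rw [h0, zero_smul]), hC', ← Finset.sum_union hSC, ha]
  have hli : LinearIndepOn F t (C.erase c0 : Finset ι) := by
    rw [linearIndepOn_finset_iff]
    intro b hb i hi
    have := key (fun i => if i ∈ C.erase c0 then b i else 0) (by
      rw [Finset.sum_union hD, Finset.sum_eq_zero, zero_add, ← hb]
      · refine Finset.sum_congr rfl fun i hi => ?_
        rw [if_pos hi]
      · intro i hi
        rw [if_neg (Finset.disjoint_left.mp hD hi), zero_smul]) i hi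
    rwa [if_pos hi] at this
  have hcard : rk F t (C.erase c0) = C.card - 1 := by
    rw [← Finset.card_erase_of_mem hc0, rk, Set.image_eq_range]
    exact (finrank_span_eq_card (ι := (C.erase c0 : Finset ι)) hli).trans (Fintype.card_coe _)
  have hdis : span F (t '' (S : Set ι)) ⊓ span F (t '' ((C.erase c0 : Finset ι) : Set ι)) = ⊥ := by
    rw [eq_bot_iff]
    rintro x ⟨hx1, hx2⟩
    obtain ⟨f, rfl⟩ := (Submodule.mem_span_image_finset_iff_exists_fun' F).mp hx1
    obtain ⟨g, hg⟩ := (Submodule.mem_span_image_finset_iff_exists_fun' F).mp hx2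
    have := key (fun i => if i ∈ C.erase c0 then - g i else f i) (by
      rw [Finset.sum_union hD]
      have e1 : ∑ i ∈ S, (if i ∈ C.erase c0 then - g i else f i) • t i = ∑ i ∈ S, f i • t i :=
        Finset.sum_congr rfl fun i hi => by
          rw [if_neg (Finset.disjoint_left.mp hD hi)]
      have e2 : ∑ i ∈ C.erase c0, (if i ∈ C.erase c0 then - g i else f i) • t i =
          - ∑ i ∈ C.erase c0, g i • t i := by
        rw [← Finset.sum_neg_distrib]
        exact Finset.sum_congr rfl fun i hi => by rw [if_pos hi, neg_smul]
      rw [e1, e2, hg, add_neg_cancel])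
    rw [Submodule.mem_bot, ← hg]
    refine Finset.sum_eq_zero fun i hi => ?_
    have h := this i hi
    rw [if_pos hi, neg_eq_zero] at h
    rw [h, zero_smul]
  have hsum := Submodule.finrank_sup_add_finrank_inf_eq (span F (t '' (S : Set ι)))
    (span F (t '' ((C.erase c0 : Finset ι) : Set ι)))
  rw [hdis, finrank_bot, ← span_union_image] at hsum
  have hmono : rk F t (S ∪ C.erase c0) ≤ rk F t (S ∪ C) := by
    apply Submodule.finrank_mono
    apply Submodule.span_mono
    apply Set.image_mono
    exact_mod_cast Finset.union_subset_union_right (Finset.erase_subset _ _)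
  have hpos := Finset.card_pos.mpr ⟨c0, hc0⟩
  change rk F t (S ∪ C.erase c0) + 0 = rk F t S + rk F t (C.erase c0) at hsum
  omega

lemma ear_uv {B : Type*} [Fintype B] [DecidableEq ι] [FiniteDimensional F U]
    (u : ι → U) (v : ι → B → F) (S C : Finset ι)
    (hSC : Disjoint S C) (a : ι → F) (hane : ∀ i ∈ C, a i ≠ 0)
    (ha : ∑ i ∈ S ∪ C, a i • (fun y => v i y • u i) = 0)
    (haS : ∑ i ∈ S, a i • (fun y => v i y • u i) ≠ 0) :
    rk F u (S ∪ C) + rk F v (S ∪ C) + 1 ≤ rk F u S + rk F v S + C.card := by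
  rw [Finset.sum_union hSC] at ha
  -- the `v`-part
  have hinf : span F (v '' (S : Set ι)) ⊓ span F (v '' (C : Set ι)) ≠ ⊥ := by
    obtain ⟨y, hy⟩ := Function.ne_iff.mp haS
    obtain ⟨φ, hφ⟩ : ∃ φ : Module.Dual F U, φ ((∑ i ∈ S, a i • (fun y => v i y • u i)) y) ≠ 0 := by
      by_contra! hcon
      exact hy ((Module.forall_dual_apply_eq_zero_iff F _).mp hcon)
    rw [Submodule.ne_bot_iff]
    refine ⟨∑ i ∈ S, (a i * φ (u i)) • v i, ⟨?_, ?_⟩, ?_⟩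
    · exact Submodule.sum_mem _ fun i hi =>
        Submodule.smul_mem _ _ (subset_span ⟨i, by exact_mod_cast hi, rfl⟩)
    · have : ∑ i ∈ S, (a i * φ (u i)) • v i = - ∑ i ∈ C, (a i * φ (u i)) • v i := by
        rw [eq_neg_iff_add_eq_zero]
        funext z
        have := congrArg φ (congrFun ha z)
        simp only [Pi.add_apply, Finset.sum_apply, Pi.smul_apply, map_add, map_sum, map_smul,
          Pi.zero_apply, map_zero, smul_eq_mul] at this ⊢
        rw [← this]
        congr 1 <;> exact Finset.sum_congr rfl fun i _ => by ring
      rw [this]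
      exact Submodule.neg_mem _ (Submodule.sum_mem _ fun i hi =>
        Submodule.smul_mem _ _ (subset_span ⟨i, by exact_mod_cast hi, rfl⟩))
    · intro h0
      apply hφ
      have := congrFun h0 y
      simp only [Finset.sum_apply, Pi.smul_apply, map_sum, map_smul,
          Pi.zero_apply, smul_eq_mul] at this ⊢
      rw [← this]
      exact Finset.sum_congr rfl fun i _ => by ring
  have hv1 := Submodule.finrank_sup_add_finrank_inf_eq (span F (v '' (S : Set ι)))
    (span F (v '' (C : Set ι)))
  have hv2 : 1 ≤ finrank F
      ↥(span F (v '' (S : Set ι)) ⊓ span F (v '' (C : Set ι))) :=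
    Submodule.one_le_finrank_iff.mpr hinf
  rw [← span_union_image] at hv1
  change rk F v (S ∪ C) + _ = rk F v S + rk F v C at hv1
  -- the `u`-part
  have hu1 := finrank_sup_le_map (span F (u '' (S : Set ι))) (span F (u '' (C : Set ι)))
  rw [← span_union_image] at hu1
  change rk F u (S ∪ C) ≤ rk F u S + _ at hu1
  let W := span F (u '' (S : Set ι))
  let Φ : (C → F) →ₗ[F] (U ⧸ W) := Fintype.linearCombination F (fun i : C => W.mkQ (u i))
  have hΦ := LinearMap.finrank_range_add_finrank_ker Φ
  have hrange : LinearMap.range Φ = (span F (u '' (C : Set ι))).map W.mkQ := by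
    rw [Fintype.range_linearCombination, Submodule.map_span, Set.image_image, Set.image_eq_range]
    rfl
  rw [hrange, Module.finrank_pi, Fintype.card_coe] at hΦ
  let M : Matrix C B F := fun i y => a i * v i y
  have hM : rk F v C = M.rank := by
    rw [Matrix.rank_eq_finrank_span_row, rk]
    suffices hs : span F (v '' (C : Set ι)) = span F (Set.range M.row) by rw [hs]
    apply le_antisymm
    · rw [span_le]
      rintro _ ⟨i, hi, rfl⟩
      have hi' : i ∈ C := by exact_mod_cast hi
      have : v i = (a i)⁻¹ • M.row ⟨i, hi'⟩ := by
        funext y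
        simp [M, Matrix.row, hane i hi']
      rw [this]
      exact Submodule.smul_mem _ _ (subset_span ⟨_, rfl⟩)
    · rw [span_le]
      rintro _ ⟨i, rfl⟩
      exact Submodule.smul_mem _ (a i) (subset_span ⟨i, i.2, rfl⟩)
  have hker : M.rank ≤ finrank F (LinearMap.ker Φ) := by
    rw [Matrix.rank_eq_finrank_span_cols]
    apply Submodule.finrank_mono
    rw [span_le]
    rintro _ ⟨y, rfl⟩
    change Φ (fun i => a i * v i y) = 0
    rw [Fintype.linearCombination_apply]
    have h := congrArg W.mkQ (congrFun ha y)
    have hS0 : W.mkQ (∑ i ∈ S, a i • v i y • u i) = 0 := by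
      rw [Submodule.mkQ_apply, Submodule.Quotient.mk_eq_zero]
      exact Submodule.sum_mem _ fun i hi => Submodule.smul_mem _ _
        (Submodule.smul_mem _ _ (subset_span ⟨i, by exact_mod_cast hi, rfl⟩))
    simp only [Pi.add_apply, Finset.sum_apply, Pi.smul_apply, map_add, hS0, zero_add,
      Pi.zero_apply, map_zero] at h
    rw [← h, map_sum, ← Finset.sum_coe_sort C]
    exact Finset.sum_congr rfl fun i _ => by rw [mul_smul, map_smul, map_smul]
  change _ ≤ _ + finrank F (Submodule.map W.mkQ (span F (u '' (C : Set ι)))) at hu1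
  omega

lemma two_factor {B : Type*} [Fintype B] [Fintype ι] [Nonempty ι] [FiniteDimensional F U]
    (u : ι → U) (v : ι → B → F) (hu : ∀ i, u i ≠ 0) (hv : ∀ i, v i ≠ 0)
    (ht : Conn F (fun i => (fun y => v i y • u i : B → U))) :
    rk F u Finset.univ + rk F v Finset.univ ≤
      rk F (fun i => (fun y => v i y • u i : B → U)) Finset.univ + 1 := by
  classical
  set t : ι → B → U := fun i => (fun y => v i y • u i) with htdef
  have htne : ∀ i, t i ≠ 0 := by
    intro i h
    obtain ⟨y, hy⟩ := Function.ne_iff.mp (hv i)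
    have := congrFun h y
    simp only [htdef, Pi.zero_apply, smul_eq_zero] at this
    exact this.elim hy (hu i)
  let P : Finset (Finset ι) := Finset.univ.filter
    (fun S => S.Nonempty ∧ rk F u S + rk F v S ≤ rk F t S + 1)
  have hP : P.Nonempty := by
    obtain ⟨e⟩ := ‹Nonempty ι›
    refine ⟨{e}, ?_⟩
    refine Finset.mem_filter.mpr ⟨Finset.mem_univ _, Finset.singleton_nonempty _, ?_⟩
    rw [rk_singleton u (hu e), rk_singleton v (hv e), rk_singleton t (htne e)]
  obtain ⟨S, hSP, hSmax⟩ := Finset.exists_max_image P Finset.card hP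
  obtain ⟨hSne, hSI⟩ := (Finset.mem_filter.mp hSP).2
  by_cases hSu : S = Finset.univ
  · rw [hSu] at hSI; exact hSI
  exfalso
  obtain ⟨a0, ha0, ha0S⟩ := ht S hSne hSu
  let Q : Finset (Finset ι) := Finset.univ.filter
    (fun C => Disjoint S C ∧ ∃ a : ι → F, ∑ i ∈ S ∪ C, a i • t i = 0 ∧ ∑ i ∈ S, a i • t i ≠ 0)
  have hQ : Q.Nonempty := by
    refine ⟨Sᶜ, ?_⟩
    simp only [Q, Finset.mem_filter, Finset.mem_univ, true_and]
    exact ⟨disjoint_compl_right, a0, by simpa using ha0, ha0S⟩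
  obtain ⟨C, hCQ, hCmin⟩ := Finset.exists_min_image Q Finset.card hQ
  obtain ⟨hSC, a, ha, haS⟩ := (Finset.mem_filter.mp hCQ).2
  have hmin : ∀ c ∈ C, ∀ b : ι → F, ∑ i ∈ S ∪ C.erase c, b i • t i = 0 →
      ∑ i ∈ S, b i • t i = 0 := by
    intro c hc b hb
    by_contra hne
    have hmem : C.erase c ∈ Q := by
      simp only [Q, Finset.mem_filter, Finset.mem_univ, true_and]
      exact ⟨hSC.mono_right (Finset.erase_subset _ _), b, hb, hne⟩
    have := hCmin _ hmem
    have := Finset.card_erase_lt_of_mem hc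
    omega
  have hCne : C.Nonempty := by
    rw [Finset.nonempty_iff_ne_empty]
    rintro rfl
    simp only [Finset.union_empty] at ha
    exact haS ha
  have hane : ∀ i ∈ C, a i ≠ 0 := by
    intro c hc h0
    apply haS
    apply hmin c hc a
    rw [← ha]
    apply Finset.sum_subset
    · exact Finset.union_subset_union_right (Finset.erase_subset _ _)
    · intro x hx hx'
      have : x = c := by
        by_contra hxc
        apply hx'
        simp only [Finset.mem_union, Finset.mem_erase] at hx ⊢
        tauto
      rw [this, h0, zero_smul]
  obtain ⟨c0, hc0⟩ := hCne
  have h1 := ear_t t S C hSC c0 hc0 a ha haS hmin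
  have h2 := ear_uv u v S C hSC a hane ha haS
  have hmem : S ∪ C ∈ P := by
    simp only [P, Finset.mem_filter, Finset.mem_univ, true_and]
    exact ⟨⟨c0, Finset.mem_union_right _ hc0⟩, by omega⟩
  have h3 := hSmax _ hmem
  rw [Finset.card_union_of_disjoint hSC] at h3
  have := Finset.card_pos.mpr ⟨c0, hc0⟩
  omega

lemma conn_left {B : Type*} [Fintype ι]
    (u : ι → U) (v : ι → B → F)
    (ht : Conn F (fun i => (fun y => v i y • u i : B → U))) : Conn F u := by
  intro S h1 h2
  obtain ⟨a, ha, haS⟩ := ht S h1 h2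
  obtain ⟨y, hy⟩ := Function.ne_iff.mp haS
  refine ⟨fun i => a i * v i y, ?_, ?_⟩
  · have := congrFun ha y
    simpa [Finset.sum_apply, mul_smul] using this
  · simpa [Finset.sum_apply, mul_smul] using hy

lemma conn_equiv [Fintype ι] {U' : Type*} [AddCommGroup U'] [Module F U'] (e : U ≃ₗ[F] U')
    (u : ι → U) (h : Conn F u) : Conn F (fun i => e (u i)) := by
  intro S h1 h2
  obtain ⟨a, ha, haS⟩ := h S h1 h2
  refine ⟨a, ?_, ?_⟩
  · simpa using congrArg e ha
  · intro h0
    apply haS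
    apply e.injective
    simpa using h0

lemma rk_equiv {U' : Type*} [AddCommGroup U'] [Module F U'] (e : U ≃ₗ[F] U')
    (u : ι → U) (S : Finset ι) : rk F (fun i => e (u i)) S = rk F u S := by
  unfold rk
  have : (fun i => e (u i)) '' (S : Set ι) = (e : U →ₗ[F] U') '' (u '' (S : Set ι)) := by
    rw [Set.image_image]; rfl
  rw [this, ← Submodule.map_span]
  exact LinearEquiv.finrank_map_eq e _

theorem rank_bound [Fintype ι] [Nonempty ι] : ∀ (d : ℕ) (n : Fin d → ℕ)
    (c : ι → (j : Fin d) → Fin (n j) → F) (_ : ∀ i j, c i j ≠ 0)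
    (_ : ∀ j, 2 ≤ rk F (fun i => c i j) Finset.univ)
    (_ : Conn F (fun i => (fun x => ∏ j, c i j (x j) : ((j : Fin d) → Fin (n j)) → F))),
    d + 1 ≤ rk F (fun i => (fun x => ∏ j, c i j (x j) : ((j : Fin d) → Fin (n j)) → F))
      Finset.univ := by
  intro d
  induction d with
  | zero =>
    intro n c _ _ _
    rw [rk, Nat.succ_le_iff, Module.finrank_pos_iff_exists_ne_zero]
    obtain ⟨i⟩ := ‹Nonempty ι›
    refine ⟨⟨_, subset_span ⟨i, by simp, rfl⟩⟩, ?_⟩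
    intro h
    have := congrFun (congrArg Subtype.val h) (fun j => j.elim0)
    simp at this
  | succ d ih =>
    intro n c hc hr hconn
    let e := (LinearEquiv.funCongrLeft F F (Fin.consEquiv (fun j => Fin (n j)))).trans
      (LinearEquiv.curry F F (Fin (n 0)) ((j : Fin d) → Fin (n j.succ)))
    let u : ι → ((j : Fin d) → Fin (n j.succ)) → F := fun i x => ∏ j, c i j.succ (x j)
    let v : ι → Fin (n 0) → F := fun i => c i 0
    have he : (fun i => e (fun x => ∏ j, c i j (x j))) = fun i y => v i y • u i := by
      funext i y x
      simp [e, u, v, LinearEquiv.funCongrLeft, Fin.prod_univ_succ, Fin.consEquiv]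
    have hconn' := conn_equiv e _ hconn
    rw [← rk_equiv e]
    rw [he] at hconn' ⊢
    have hu : ∀ i, u i ≠ 0 := by
      intro i h
      choose x hx using fun j => Function.ne_iff.mp (hc i j)
      have := congrFun h (fun j => x j.succ)
      simp only [u, Pi.zero_apply, Finset.prod_eq_zero_iff] at this
      obtain ⟨j, -, hj⟩ := this
      exact hx _ hj
    have h1 := two_factor u v hu (fun i => hc i 0) hconn'
    have h2 := ih (fun j => n j.succ) (fun i j => c i j.succ) (fun i j => hc i _)
      (fun j => hr j.succ) (conn_left u v hconn')
    have h3 := hr 0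
    change d + 1 ≤ rk F u Finset.univ at h2
    change 2 ≤ rk F v Finset.univ at h3
    omega

end Helpers

/-- A simple, minimal set-multilinear ΣΠΣ(k) circuit (k ≥ 2) computing the
zero polynomial has all gate degrees (equivalently, the number of blocks d) at most k − 2.
Gates are given by coefficient vectors `c i j` of the nonzero linear forms `ℓ_{i,j}` in block j;
simplicity `gcd(T_1,…,T_k) = 1` is expressed as: every common divisor of the gates is a unit. -/
theorem stmt_0 {F : Type*} [Field F] {d k : ℕ} (hd : 1 ≤ d) (hk : 2 ≤ k)
    {n : Fin d → ℕ}
    (c : Fin k → (j : Fin d) → Fin (n j) → F)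
    (hc : ∀ i j, c i j ≠ 0)
    (T : Fin k → MvPolynomial ((j : Fin d) × Fin (n j)) F)
    (hT : ∀ i, T i = ∏ j : Fin d, ∑ t : Fin (n j), C (c i j t) * X ⟨j, t⟩)
    (hsimple : ∀ p : MvPolynomial ((j : Fin d) × Fin (n j)) F, (∀ i, p ∣ T i) → IsUnit p)
    (hmin : ∀ U : Finset (Fin k), U.Nonempty → U ≠ Finset.univ → (∑ i ∈ U, T i) ≠ 0)
    (hzero : (∑ i, T i) = 0) :
    (∀ i, (T i).totalDegree ≤ k - 2) ∧ d ≤ k - 2 := by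
  have i0 : Fin k := ⟨0, by omega⟩
  have : Nonempty (Fin k) := ⟨i0⟩
  let f : Fin k → ((j : Fin d) → Fin (n j)) → F := fun i x => ∏ j, c i j (x j)
  have hTf : ∀ i, T i = ∑ x : (j : Fin d) → Fin (n j), C (f i x) * ∏ j, X ⟨j, x j⟩ := by
    intro i
    rw [hT, Finset.prod_univ_sum]
    simp [f, Finset.prod_mul_distrib, map_prod]
  have hf0 : ∑ i, f i = 0 := by
    classical
    funext x
    have := congrArg (MvPolynomial.eval (fun s => if s.2 = x s.1 then (1 : F) else 0)) hzero
    simpa [hT, map_sum, map_prod, f] using this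
  have hconn : Conn F f := by
    intro S h1 h2
    refine ⟨fun _ => 1, by simpa using hf0, ?_⟩
    intro h
    apply hmin S h1 h2
    simp only [one_smul] at h
    simp only [hTf]
    rw [Finset.sum_comm]
    refine Finset.sum_eq_zero fun x _ => ?_
    rw [← Finset.sum_mul, ← map_sum]
    have := congrFun h x
    rw [Finset.sum_apply] at this
    rw [this]
    simp
  have hrk : ∀ j, 2 ≤ rk F (fun i => c i j) Finset.univ := by
    intro j
    have hex : ∃ i, ∀ r : F, r • c i0 j ≠ c i j := by
      by_contra! hcon
      have hunit := hsimple (∑ t : Fin (n j), C (c i0 j t) * X ⟨j, t⟩) (by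
        intro i
        rw [hT]
        refine dvd_trans ?_ (Finset.dvd_prod_of_mem _ (Finset.mem_univ j))
        obtain ⟨r, hr⟩ := hcon i
        refine ⟨C r, ?_⟩
        rw [Finset.sum_mul]
        refine Finset.sum_congr rfl fun t _ => ?_
        rw [← hr]
        simp only [Pi.smul_apply, smul_eq_mul, C_mul]
        ring)
      have := hunit.map (MvPolynomial.eval (fun _ => (0 : F)))
      simp at this
    obtain ⟨i, hi⟩ := hex
    have hli : LinearIndependent F ![c i0 j, c i j] :=
      (LinearIndependent.pair_iff' (hc i0 j)).mpr hi
    have := finrank_span_eq_card hli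
    simp only [Fintype.card_fin] at this
    refine le_trans (le_of_eq this.symm) ?_
    apply Submodule.finrank_mono
    apply Submodule.span_mono
    rintro _ ⟨m, rfl⟩
    fin_cases m
    · exact ⟨i0, by simp, rfl⟩
    · exact ⟨i, by simp, rfl⟩
  have hmain := rank_bound d n c hc hrk hconn
  have hle : rk F f Finset.univ + 1 ≤ k := by
    have hdep : ¬ LinearIndependent F f := by
      intro h
      rw [Fintype.linearIndependent_iff] at h
      exact one_ne_zero (h (fun _ => 1) (by simpa using hf0) i0)
    have h1 : rk F f Finset.univ ≤ k := by
      have := finrank_range_le_card (R := F) f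
      rw [rk, Finset.coe_univ, Set.image_univ]
      simpa [Set.finrank] using this
    have h2 : rk F f Finset.univ ≠ k := by
      intro h
      apply hdep
      rw [linearIndependent_iff_card_eq_finrank_span]
      rw [rk, Finset.coe_univ, Set.image_univ] at h
      simpa [Set.finrank] using h.symm
    omega
  change d + 1 ≤ rk F f Finset.univ at hmain
  have hdk : d ≤ k - 2 := by omega
  refine ⟨fun i => le_trans ?_ hdk, hdk⟩
  rw [hT]
  refine (MvPolynomial.totalDegree_finsetProd _ _).trans ?_
  refine (Finset.sum_le_card_nsmul _ _ 1 ?_).trans (by simp)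
  intro j _
  refine MvPolynomial.totalDegree_finsetSum_le ?_
  intro t _
  refine (MvPolynomial.totalDegree_mul _ _).trans ?_
  simp
end

section
/- Let C = T_1 + ⋯ + T_k be a set-multilinear ΣΠΣ(k) circuit with respect to a partition X = X_1 ⊔ ⋯ ⊔ X_d that computes the zero polynomial (T_1 + ⋯ + T_k = 0) and is minimal (for every nonempty proper subset U ⊊ {1,…,k}, Σ_{i∈U} T_i ≠ 0). Then for all i ≠ j in {1,…,k}, the number of linear-form factors of T_i not shared with T_j (counted with multiplicity), namely max(deg T_i, deg T_j) − deg(gcd(T_i, T_j)), is at most k − 2. -/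
open MvPolynomial

/-- Partial product of coefficients, viewed as a function (tensor) on index choices. -/
def pv {F : Type*} [Field F] {d k : ℕ} {n : Fin d → ℕ}
    (c : Fin k → (j : Fin d) → Fin (n j) → F) (S : Finset (Fin d)) (a : Fin k) :
    ((j : Fin d) → Fin (n j)) → F :=
  fun f => ∏ j ∈ S, c a j (f j)

theorem pv_insert {F : Type*} [Field F] {d k : ℕ} {n : Fin d → ℕ}
    (c : Fin k → (j : Fin d) → Fin (n j) → F) (S : Finset (Fin d)) (p : Fin d) (hp : p ∉ S)
    (a : Fin k) (f : (j : Fin d) → Fin (n j)) :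
    pv c (insert p S) a f = c a p (f p) * pv c S a f := by
  simp [pv, Finset.prod_insert hp]

theorem pv_update {F : Type*} [Field F] {d k : ℕ} {n : Fin d → ℕ}
    (c : Fin k → (j : Fin d) → Fin (n j) → F) (S : Finset (Fin d)) (p : Fin d) (hp : p ∉ S)
    (a : Fin k) (f : (j : Fin d) → Fin (n j)) (t : Fin (n p)) :
    pv c S a (Function.update f p t) = pv c S a f := by
  unfold pv
  refine Finset.prod_congr rfl fun j hj => ?_
  have : j ≠ p := fun h => hp (h ▸ hj)
  rw [Function.update_of_ne this]

theorem indep_insert {F : Type*} [Field F] {d k : ℕ} {n : Fin d → ℕ}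
    (c : Fin k → (j : Fin d) → Fin (n j) → F) (hc : ∀ i j, c i j ≠ 0)
    (S : Finset (Fin d)) (p : Fin d) (hp : p ∉ S) {κ : Type} [Fintype κ] (e : κ → Fin k)
    (hli : LinearIndependent F (pv c S ∘ e)) :
    LinearIndependent F (pv c (insert p S) ∘ e) := by
  rw [Fintype.linearIndependent_iff] at hli ⊢
  intro g hg b
  have key : ∀ t, g b * c (e b) p t = 0 := by
    intro t
    refine hli (fun b => g b * c (e b) p t) ?_ b
    funext f
    have := congrFun hg (Function.update f p t)
    simp only [Finset.sum_apply, Pi.smul_apply, smul_eq_mul, Function.comp, Pi.zero_apply,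
      pv_insert c S p hp, pv_update c S p hp, Function.update_self] at this ⊢
    rw [← this]
    exact Finset.sum_congr rfl fun _ _ => by ring
  obtain ⟨t, ht⟩ := Function.ne_iff.1 (hc (e b) p)
  exact (mul_eq_zero.1 (key t)).resolve_right ht

theorem rank_insert_le {F : Type*} [Field F] {d k : ℕ} {n : Fin d → ℕ}
    (c : Fin k → (j : Fin d) → Fin (n j) → F) (hc : ∀ i j, c i j ≠ 0)
    (hmin : ∀ U : Finset (Fin k), U.Nonempty → U ≠ Finset.univ →
      ∃ f : (j : Fin d) → Fin (n j), ∑ a ∈ U, ∏ j, c a j (f j) ≠ 0)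
    (hzero : ∀ f : (j : Fin d) → Fin (n j), ∑ a, ∏ j, c a j (f j) = 0)
    (S : Finset (Fin d)) (p : Fin d) (hp : p ∉ S) (i i' : Fin k) :
    Module.finrank F (Submodule.span F (Set.range (pv c S))) +
      (open Classical in if (∃ l : F, c i' p = l • c i p) then 0 else 1) ≤
    Module.finrank F (Submodule.span F (Set.range (pv c (insert p S)))) := by
  classical
  obtain ⟨κ, e, he, hspan, hli⟩ := exists_linearIndependent' F (pv c S)
  have : Finite κ := Finite.of_injective e he
  obtain ⟨m, ⟨eq⟩⟩ := Finite.exists_equiv_fin κ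
  -- replace κ by Fin m
  obtain ⟨e, he, hspan, hli⟩ : ∃ e : Fin m → Fin k, Function.Injective e ∧
      Submodule.span F (Set.range (pv c S ∘ e)) = Submodule.span F (Set.range (pv c S)) ∧
      LinearIndependent F (pv c S ∘ e) := by
    refine ⟨e ∘ eq.symm, he.comp eq.symm.injective, ?_, ?_⟩
    · rw [← hspan, ← Function.comp_assoc, Set.range_comp (pv c S ∘ e), eq.symm.range_eq_univ,
        Set.image_univ]
    · exact hli.comp _ eq.symm.injective
  have hli' := indep_insert c hc S p hp e hli
  have hr : Module.finrank F (Submodule.span F (Set.range (pv c S))) = m := by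
    rw [← hspan, finrank_span_eq_card hli, Fintype.card_fin]
  have hsub : Submodule.span F (Set.range (pv c (insert p S) ∘ e)) ≤
      Submodule.span F (Set.range (pv c (insert p S))) :=
    Submodule.span_mono (Set.range_comp_subset_range _ _)
  have hr' : Module.finrank F (Submodule.span F (Set.range (pv c (insert p S) ∘ e))) = m := by
    rw [finrank_span_eq_card hli', Fintype.card_fin]
  have hle := Submodule.finrank_mono hsub
  split_ifs with hl
  · omega
  by_contra hlt
  have hspan' := Submodule.eq_of_le_of_finrank_le hsub (by omega)
  have hx : ∀ a, ∃ x : Fin m → F, ∑ b, x b • pv c S (e b) = pv c S a := by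
    intro a
    have : pv c S a ∈ Submodule.span F (Set.range (pv c S ∘ e)) := by
      rw [hspan]; exact Submodule.subset_span ⟨a, rfl⟩
    exact (Submodule.mem_span_range_iff_exists_fun F).1 this
  have hy : ∀ a, ∃ x : Fin m → F, ∑ b, x b • pv c (insert p S) (e b) = pv c (insert p S) a := by
    intro a
    have : pv c (insert p S) a ∈ Submodule.span F (Set.range (pv c (insert p S) ∘ e)) := by
      rw [hspan']; exact Submodule.subset_span ⟨a, rfl⟩
    exact (Submodule.mem_span_range_iff_exists_fun F).1 this
  choose x hx using hx
  choose y hy using hy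
  have hxy : ∀ a b t, x a b * c a p t = y a b * c (e b) p t := by
    intro a b t
    have h := Fintype.linearIndependent_iff.1 hli
      (fun b => x a b * c a p t - y a b * c (e b) p t) ?_ b
    · exact sub_eq_zero.1 h
    funext f
    have h1 := congrFun (hx a) f
    have h2 := congrFun (hy a) (Function.update f p t)
    simp only [Finset.sum_apply, Pi.smul_apply, smul_eq_mul, Function.comp, Pi.zero_apply,
      pv_insert c S p hp, pv_update c S p hp, Function.update_self] at h1 h2 ⊢
    rw [← h1, Finset.mul_sum] at h2
    simp only [sub_mul, Finset.sum_sub_distrib]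
    rw [sub_eq_zero]
    calc _ = ∑ b, c a p t * (x a b * pv c S (e b) f) :=
            Finset.sum_congr rfl fun _ _ => by ring
      _ = _ := h2.symm
      _ = _ := Finset.sum_congr rfl fun _ _ => by ring
  let P : Fin k → Prop := fun a => ∃ l : F, c a p = l • c i p
  have hP : ∀ a b, y a b ≠ 0 → (P a ↔ P (e b)) := by
    intro a b hyb
    have hxb : x a b ≠ 0 := by
      intro h0
      obtain ⟨t, ht⟩ := Function.ne_iff.1 (hc (e b) p)
      have := hxy a b t
      rw [h0, zero_mul] at this
      exact (mul_ne_zero hyb ht) this.symm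
    constructor
    · rintro ⟨l, hl⟩
      refine ⟨(y a b)⁻¹ * x a b * l, funext fun t => ?_⟩
      have h1 := hxy a b t
      have h2 := congrFun hl t
      simp only [Pi.smul_apply, smul_eq_mul] at h2 ⊢
      rw [h2] at h1
      field_simp
      linear_combination -h1
    · rintro ⟨l, hl⟩
      refine ⟨(x a b)⁻¹ * y a b * l, funext fun t => ?_⟩
      have h1 := hxy a b t
      have h2 := congrFun hl t
      simp only [Pi.smul_apply, smul_eq_mul] at h2 ⊢
      rw [h2] at h1
      field_simp
      linear_combination h1
  have hsplit : ∀ z : Fin k → F, ∑ a, z a • pv c (insert p S) a = 0 →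
      ∑ a ∈ Finset.univ.filter P, z a • pv c (insert p S) a = 0 := by
    intro z hz
    have hz' : ∀ b, ∑ a, z a * y a b = 0 := by
      refine Fintype.linearIndependent_iff.1 hli' (fun b => ∑ a, z a * y a b) ?_
      rw [← hz]
      simp only [Finset.sum_smul]
      rw [Finset.sum_comm]
      refine Finset.sum_congr rfl fun a _ => ?_
      rw [← hy a, Finset.smul_sum]
      exact Finset.sum_congr rfl fun _ _ => by rw [mul_smul]; rfl
    have h1 : ∑ a ∈ Finset.univ.filter P, z a • pv c (insert p S) a =
        ∑ b, (∑ a ∈ Finset.univ.filter P, z a * y a b) • pv c (insert p S) (e b) := by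
      simp only [Finset.sum_smul]
      rw [Finset.sum_comm]
      refine Finset.sum_congr rfl fun a _ => ?_
      rw [← hy a, Finset.smul_sum]
      exact Finset.sum_congr rfl fun _ _ => by rw [mul_smul]
    rw [h1]
    refine Finset.sum_eq_zero fun b _ => ?_
    suffices h : ∑ a ∈ Finset.univ.filter P, z a * y a b = 0 by rw [h, zero_smul]
    by_cases hb : P (e b)
    · rw [← hz' b]
      refine Finset.sum_subset (Finset.subset_univ _) fun a _ ha => ?_
      by_cases h0 : y a b = 0
      · rw [h0, mul_zero]
      · exact absurd (by simpa using (hP a b h0).2 hb) ha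
    · refine Finset.sum_eq_zero fun a ha => ?_
      by_cases h0 : y a b = 0
      · rw [h0, mul_zero]
      · exact absurd ((hP a b h0).1 (by simpa using ha)) hb
  obtain ⟨f, hf⟩ := hmin (Finset.univ.filter P) ⟨i, by simpa using ⟨1, by simp⟩⟩ (by
    intro h
    have : i' ∈ Finset.univ.filter P := by rw [h]; exact Finset.mem_univ _
    exact hl (by simpa using this))
  apply hf
  have h := hsplit (fun a => ∏ j ∈ (insert p S)ᶜ, c a j (f j)) (by
    funext g
    refine Eq.trans ?_ (
      hzero (fun j => if j ∈ insert p S then g j else f j))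
    simp only [Finset.sum_apply, Pi.smul_apply, smul_eq_mul, pv]
    refine Finset.sum_congr rfl fun a _ => ?_
    rw [← Finset.prod_compl_mul_prod (insert p S)]
    congr 1
    · exact Finset.prod_congr rfl fun j hj => by rw [if_neg (Finset.mem_compl.1 hj)]
    · exact Finset.prod_congr rfl fun j hj => by rw [if_pos hj])
  have h' := congrFun h f
  simp only [Finset.sum_apply, Pi.smul_apply, smul_eq_mul, pv, Finset.prod_compl_mul_prod,
    Pi.zero_apply] at h'
  exact h'

theorem count_le {F : Type*} [Field F] {d k : ℕ} {n : Fin d → ℕ}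
    (c : Fin k → (j : Fin d) → Fin (n j) → F) (hc : ∀ i j, c i j ≠ 0)
    (hmin : ∀ U : Finset (Fin k), U.Nonempty → U ≠ Finset.univ →
      ∃ f : (j : Fin d) → Fin (n j), ∑ a ∈ U, ∏ j, c a j (f j) ≠ 0)
    (hzero : ∀ f : (j : Fin d) → Fin (n j), ∑ a, ∏ j, c a j (f j) = 0)
    (i i' : Fin k) (S : Finset (Fin d)) :
    1 + ∑ p ∈ S, (open Classical in if (∃ l : F, c i' p = l • c i p) then 0 else 1) ≤
    Module.finrank F (Submodule.span F (Set.range (pv c S))) := by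
  classical
  induction S using Finset.induction_on with
  | empty =>
    rw [Finset.sum_empty, add_zero, Nat.succ_le_iff, Module.finrank_pos_iff,
      Submodule.nontrivial_iff_ne_bot, Ne, Submodule.span_eq_bot]
    intro h
    have h1 := h (pv c ∅ i) ⟨i, rfl⟩
    have hne : ∀ j, ∃ t, c i j t ≠ 0 := fun j => Function.ne_iff.1 (hc i j)
    choose f _ using hne
    have := congrFun h1 f
    simp [pv] at this
  | insert p S hp ih =>
    rw [Finset.sum_insert hp]
    have := rank_insert_le c hc hmin hzero S p hp i i'
    omega

theorem stmt_1 {F : Type*} [Field F] {d k : ℕ} (hd : 1 ≤ d)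
    {n : Fin d → ℕ}
    (c : Fin k → (j : Fin d) → Fin (n j) → F)
    (hc : ∀ i j, c i j ≠ 0)
    (T : Fin k → MvPolynomial ((j : Fin d) × Fin (n j)) F)
    (hT : ∀ i, T i = ∏ j : Fin d, ∑ t : Fin (n j), C (c i j t) * X ⟨j, t⟩)
    (hmin : ∀ U : Finset (Fin k), U.Nonempty → U ≠ Finset.univ → (∑ i ∈ U, T i) ≠ 0)
    (hzero : (∑ i, T i) = 0) :
    ∀ i j : Fin k, i ≠ j →
      ∃ g : MvPolynomial ((j : Fin d) × Fin (n j)) F, g ∣ T i ∧ g ∣ T j ∧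
        max (T i).totalDegree (T j).totalDegree - g.totalDegree ≤ k - 2 := by
  classical
  intro i i' hii
  have hzero' : ∀ f : (j : Fin d) → Fin (n j), ∑ a, ∏ j, c a j (f j) = 0 := by
    intro f
    have h := congrArg (MvPolynomial.eval
      (fun s : (j : Fin d) × Fin (n j) => if s.2 = f s.1 then (1 : F) else 0)) hzero
    simpa [hT, map_sum, map_prod] using h
  have hmin' : ∀ U : Finset (Fin k), U.Nonempty → U ≠ Finset.univ →
      ∃ f : (j : Fin d) → Fin (n j), ∑ a ∈ U, ∏ j, c a j (f j) ≠ 0 := by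
    intro U h1 h2
    by_contra hcon
    push Not at hcon
    apply hmin U h1 h2
    simp only [hT, Finset.prod_univ_sum]
    rw [Finset.sum_comm]
    refine Finset.sum_eq_zero fun f _ => ?_
    simp only [Finset.prod_mul_distrib, ← map_prod]
    rw [← Finset.sum_mul, ← map_sum, hcon f, map_zero, zero_mul]
  have hcount := count_le c hc hmin' hzero' i i' Finset.univ
  have hrank : Module.finrank F (Submodule.span F (Set.range (pv c Finset.univ))) < k := by
    have h1 : Set.finrank F (Set.range (pv c Finset.univ)) ≤ Fintype.card (Fin k) :=
      finrank_range_le_card _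
    rw [Fintype.card_fin] at h1
    refine lt_of_le_of_ne h1 fun h2 => ?_
    have hli : LinearIndependent F (pv c Finset.univ) := by
      rw [linearIndependent_iff_card_eq_finrank_span, Fintype.card_fin]
      exact h2.symm
    have := Fintype.linearIndependent_iff.1 hli (fun _ => 1) (by
      funext f
      simpa [pv] using hzero' f) i
    exact one_ne_zero this
  let L : Fin k → Fin d → MvPolynomial ((j : Fin d) × Fin (n j)) F :=
    fun a j => ∑ t : Fin (n j), C (c a j t) * X ⟨j, t⟩
  have hL : ∀ a j, (L a j).IsHomogeneous 1 := by
    intro a j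
    refine MvPolynomial.IsHomogeneous.sum _ _ _ fun t _ => ?_
    simpa using (MvPolynomial.isHomogeneous_C _ (c a j t)).mul (MvPolynomial.isHomogeneous_X F _)
  have hL0 : ∀ a j, L a j ≠ 0 := by
    intro a j h0
    apply hc a j
    funext t
    have h := congrArg (MvPolynomial.eval
      (fun s : (j : Fin d) × Fin (n j) => if s = ⟨j, t⟩ then (1 : F) else 0)) h0
    simpa [L] using h
  let G : Finset (Fin d) := Finset.univ.filter fun p => ∃ l : F, c i' p = l • c i p
  have hdeg : ∀ a (S : Finset (Fin d)), (∏ j ∈ S, L a j).totalDegree = S.card := by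
    intro a S
    have h := MvPolynomial.IsHomogeneous.prod S (L a) (fun _ => 1) (fun j _ => hL a j)
    rw [h.totalDegree (Finset.prod_ne_zero_iff.2 fun j _ => hL0 a j)]
    simp
  refine ⟨∏ j ∈ G, L i j, ?_, ?_, ?_⟩
  · rw [hT]
    exact Finset.prod_dvd_prod_of_subset _ _ _ (Finset.subset_univ _)
  · rw [hT]
    refine dvd_trans (Finset.prod_dvd_prod_of_dvd _ (L i') fun p hp => ?_)
      (Finset.prod_dvd_prod_of_subset _ _ _ (Finset.subset_univ _))
    obtain ⟨l, hl⟩ := (Finset.mem_filter.1 hp).2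
    refine ⟨C l, ?_⟩
    simp only [L, hl, Finset.sum_mul, Pi.smul_apply, smul_eq_mul, map_mul]
    exact Finset.sum_congr rfl fun _ _ => by ring
  · have e1 : ∀ a, (T a).totalDegree = d := by
      intro a
      rw [hT]
      exact (hdeg a Finset.univ).trans (by simp)
    rw [e1, e1, hdeg, max_self]
    have h3 : G.card + ∑ p : Fin d,
        (if (∃ l : F, c i' p = l • c i p) then 0 else 1) = d := by
      rw [Finset.card_filter, ← Finset.sum_add_distrib]
      rw [Finset.sum_congr rfl (g := fun _ => 1) (fun p _ => by split_ifs <;> rfl)]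
      simp
    have h4 : (∑ p : Fin d, (if (∃ l : F, c i' p = l • c i p) then 0 else 1)) + 2 ≤ k := by
      refine le_trans ?_ (Nat.succ_le_of_lt hrank)
      have : ∀ a b : ℕ, 1 + a ≤ b → a + 2 ≤ b + 1 := by intros; omega
      exact this _ _ hcount
    omega
end

section
/- Let C = T_1 + ⋯ + T_k and C' = T'_1 + ⋯ + T'_{k'} be two set-multilinear ΣΠΣ circuits with respect to the same partition X = X_1 ⊔ ⋯ ⊔ X_d, computing the same polynomial, with k' ≤ k. Suppose C is minimal, i.e., no nonempty subset of its gates sums to the zero polynomial. Then for each gate T_i of C there exists a gate T'_j of C' such that max(deg T_i, deg T'_j) − deg(gcd(T_i, T'_j)) ≤ k + k' − 2. -/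
open MvPolynomial

section Helpers
variable {K : Type*} [Field K] {d : ℕ} {n : Fin d → ℕ} {ι : Type*} [Fintype ι]

/-- Value of the linear form with coefficients `c a j` at the point `v`. -/
def lfEval (c : ι → (j : Fin d) → Fin (n j) → K) (a : ι) (j : Fin d) (v : Fin (n j) → K) : K :=
  ∑ t, c a j t * v t

/-- Linear relations among the products of the linear forms over the coordinates in `S`. -/
def relSp (c : ι → (j : Fin d) → Fin (n j) → K) (S : Finset (Fin d)) : Submodule K (ι → K) where
  carrier := {b | ∀ v : (j : Fin d) → Fin (n j) → K, ∑ a, b a * ∏ j ∈ S, lfEval c a j (v j) = 0}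
  add_mem' := by
    intro x y hx hy v
    simp only [Pi.add_apply, add_mul, Finset.sum_add_distrib]
    rw [hx v, hy v, add_zero]
  zero_mem' := by intro v; simp
  smul_mem' := by
    intro r x hx v
    simp only [Pi.smul_apply, smul_eq_mul, mul_assoc, ← Finset.mul_sum]
    rw [hx v, mul_zero]

lemma mem_relSp (c : ι → (j : Fin d) → Fin (n j) → K) (S : Finset (Fin d)) (b : ι → K) :
    b ∈ relSp c S ↔ ∀ v : (j : Fin d) → Fin (n j) → K,
      ∑ a, b a * ∏ j ∈ S, lfEval c a j (v j) = 0 := Iff.rfl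

lemma mem_relSp_insert (c : ι → (j : Fin d) → Fin (n j) → K) (S : Finset (Fin d)) (j : Fin d)
    (hj : j ∉ S) (b : ι → K) :
    b ∈ relSp c (insert j S) ↔
      ∀ g : Fin (n j) → K, (fun a => lfEval c a j g * b a) ∈ relSp c S := by
  classical
  simp only [mem_relSp]
  constructor
  · intro h g v
    have := h (Function.update v j g)
    rw [← this]
    refine Finset.sum_congr rfl fun a _ => ?_
    rw [Finset.prod_insert hj, Function.update_self]
    have : ∏ x ∈ S, lfEval c a x (Function.update v j g x) = ∏ x ∈ S, lfEval c a x (v x) := by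
      refine Finset.prod_congr rfl fun x hx => ?_
      rw [Function.update_of_ne (by rintro rfl; exact hj hx)]
    rw [this]; ring
  · intro h v
    rw [← h (v j) v]
    refine Finset.sum_congr rfl fun a _ => ?_
    rw [Finset.prod_insert hj]; ring

/-- Diagonal stability passes to larger coordinate sets. -/
lemma stable_mono (c : ι → (j : Fin d) → Fin (n j) → K) (e : ι → K) (S T : Finset (Fin d))
    (hST : S ⊆ T) (h : ∀ b ∈ relSp c S, e * b ∈ relSp c S) :
    ∀ b ∈ relSp c T, e * b ∈ relSp c T := by
  classical
  obtain ⟨U, hU, rfl⟩ : ∃ U, Disjoint S U ∧ T = S ∪ U :=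
    ⟨T \ S, Finset.disjoint_sdiff, by rw [Finset.union_sdiff_of_subset hST]⟩
  clear hST
  induction U using Finset.induction_on with
  | empty => simpa using h
  | insert j U hjU ih =>
    rw [Finset.disjoint_insert_right] at hU
    have ih := ih hU.2
    have hj : j ∉ S ∪ U := by simp [hjU, hU.1]
    rw [Finset.union_insert]
    intro b hb
    rw [mem_relSp_insert _ _ _ hj] at hb ⊢
    intro g
    have := ih _ (hb g)
    convert this using 1
    ext a; simp only [Pi.mul_apply]; ring

lemma stable_poly (R : Submodule K (ι → K)) (μ : ι → K) (h : ∀ b ∈ R, μ * b ∈ R)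
    (p : Polynomial K) : ∀ b ∈ R, (fun a => p.eval (μ a)) * b ∈ R := by
  induction p using Polynomial.induction_on' with
  | add p q hp hq =>
    intro b hb
    convert R.add_mem (hp b hb) (hq b hb) using 1
    ext a; simp [add_mul]
  | monomial m r =>
    intro b hb
    have : ∀ m : ℕ, μ ^ m * b ∈ R := by
      intro m
      induction m with
      | zero => simpa using hb
      | succ m ih => rw [pow_succ', mul_assoc]; exact h _ ih
    convert R.smul_mem r (this m) using 1
    ext a; simp [mul_assoc]

lemma stable_ind [DecidableEq K] (R : Submodule K (ι → K)) (μ : ι → K) (h : ∀ b ∈ R, μ * b ∈ R)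
    (w : K) : ∀ b ∈ R, (fun a => if μ a = w then 1 else 0) * b ∈ R := by
  intro b hb
  have := stable_poly R μ h
    (Lagrange.interpolate (Finset.univ.image μ) id (fun x => if x = w then (1 : K) else 0)) b hb
  convert this using 3 with a
  have := Lagrange.eval_interpolate_at_node (s := Finset.univ.image μ) (v := id)
    (fun x => if x = w then (1 : K) else 0) (Set.injOn_id _)
    (Finset.mem_image_of_mem μ (Finset.mem_univ a))
  simpa using this.symm

lemma exists_generic [Infinite K] (c : ι → (j : Fin d) → Fin (n j) → K)
    (hc : ∀ a j, c a j ≠ 0) (j : Fin d) : ∃ f : Fin (n j) → K, ∀ a, lfEval c a j f ≠ 0 := by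
  classical
  by_contra hcon
  push Not at hcon
  let P : MvPolynomial (Fin (n j)) K := ∏ a, ∑ t, C (c a j t) * X t
  have hP : P = 0 := by
    apply MvPolynomial.funext
    intro f
    obtain ⟨a, ha⟩ := hcon f
    simp only [P, map_prod, map_zero]
    apply Finset.prod_eq_zero (Finset.mem_univ a)
    simpa [lfEval] using ha
  obtain ⟨a, -, ha⟩ := Finset.prod_eq_zero_iff.1 hP
  apply hc a j
  ext t
  have := congrArg (eval (Pi.single t (1 : K))) ha
  simpa [Pi.single_apply] using this

/-- Diagonal rescaling. -/
lemma finrank_step [Infinite K] (c : ι → (j : Fin d) → Fin (n j) → K)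
    (hc : ∀ a j, c a j ≠ 0) (β : ι → K) (hβ : β ∈ relSp c Finset.univ)
    (hmin : ∀ A : ι → Prop, ∀ [DecidablePred A], (∃ a, A a) → (∃ a, ¬ A a) →
      (fun a => if A a then 1 else 0) * β ∉ relSp c Finset.univ)
    (S : Finset (Fin d)) (j : Fin d) (hj : j ∉ S) :
    Module.finrank K (relSp c (insert j S)) ≤ Module.finrank K (relSp c S) ∧
    ((∃ a b s t, c a j s * c b j t ≠ c a j t * c b j s) →
      Module.finrank K (relSp c (insert j S)) < Module.finrank K (relSp c S)) := by
  classical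
  obtain ⟨f, hf⟩ := exists_generic c hc j
  let φ : (ι → K) →ₗ[K] (ι → K) :=
    { toFun := fun b a => lfEval c a j f * b a
      map_add' := by intro x y; ext a; simp [mul_add]
      map_smul' := by intro r x; ext a; simp; ring }
  have hφ : Function.Injective φ := by
    intro x y hxy
    ext a
    exact mul_left_cancel₀ (hf a) (congrFun hxy a)
  have hle : (relSp c (insert j S)).map φ ≤ relSp c S := by
    rintro _ ⟨b, hb, rfl⟩
    exact (mem_relSp_insert c S j hj b).1 hb f
  have hrk : Module.finrank K ((relSp c (insert j S)).map φ)
      = Module.finrank K (relSp c (insert j S)) :=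
    (Submodule.equivMapOfInjective φ hφ _).finrank_eq.symm
  have h1 := Submodule.finrank_mono hle
  rw [hrk] at h1
  refine ⟨h1, ?_⟩
  rintro ⟨a, b, s, t, hne⟩
  refine lt_of_le_of_ne h1 fun heq => ?_
  have hEq := Submodule.eq_of_le_of_finrank_eq hle (hrk.trans heq)
  have key : ∀ g : Fin (n j) → K, ∀ x,
      lfEval c x j g / lfEval c x j f = lfEval c a j g / lfEval c a j f := by
    intro g
    let μ : ι → K := fun x => lfEval c x j g / lfEval c x j f
    have hst : ∀ b ∈ relSp c (insert j S), μ * b ∈ relSp c (insert j S) := by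
      intro b hb
      have := (mem_relSp_insert c S j hj b).1 hb g
      rw [← hEq] at this
      obtain ⟨b', hb', hbb⟩ := this
      suffices hh : μ * b = b' by rw [hh]; exact hb'
      ext x
      have := congrFun hbb x
      simp only [φ, LinearMap.coe_mk, AddHom.coe_mk] at this
      simp only [μ, Pi.mul_apply]
      rw [div_mul_eq_mul_div, div_eq_iff (hf x), ← this, mul_comm]
    have h2 := stable_mono c _ _ Finset.univ (Finset.subset_univ _)
      (stable_ind _ μ hst (μ a)) β hβ
    intro x
    by_contra hx
    exact hmin (fun x => μ x = μ a) ⟨a, rfl⟩ ⟨x, hx⟩ h2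
  have hs : ∀ s x, lfEval c x j (Pi.single s 1) = c x j s := by
    intro s x; simp [lfEval, Pi.single_apply]
  have k1 := key (Pi.single s 1) b
  have k2 := key (Pi.single t 1) b
  rw [hs, hs, div_eq_div_iff (hf _) (hf _)] at k1 k2
  apply hne
  have ha := hf a
  have hb := hf b
  apply mul_right_cancel₀ (mul_ne_zero ha hb)
  linear_combination (c b j s * lfEval c a j f) * k2 - (c b j t * lfEval c a j f) * k1

lemma card_bound [Infinite K] (c : ι → (j : Fin d) → Fin (n j) → K) [Nonempty ι]
    (hc : ∀ a j, c a j ≠ 0) (β : ι → K) (hβ0 : β ≠ 0) (hβ : β ∈ relSp c Finset.univ)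
    (hmin : ∀ A : ι → Prop, ∀ [DecidablePred A], (∃ a, A a) → (∃ a, ¬ A a) →
      (fun a => if A a then 1 else 0) * β ∉ relSp c Finset.univ)
    (N : Finset (Fin d)) (hN : ∀ j ∈ N, ∃ a b s t, c a j s * c b j t ≠ c a j t * c b j s) :
    N.card + 2 ≤ Fintype.card ι := by
  classical
  have main : ∀ S : Finset (Fin d), Module.finrank K (relSp c S) + (S ∩ N).card + 1
      ≤ Fintype.card ι := by
    intro S
    induction S using Finset.induction_on with
    | empty =>
      have : relSp c ∅ < ⊤ := by
        rw [lt_top_iff_ne_top]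
        intro h
        obtain ⟨a⟩ := ‹Nonempty ι›
        have h1 : (Pi.single a 1 : ι → K) ∈ relSp c ∅ := h ▸ Submodule.mem_top
        have := (mem_relSp _ _ _).1 h1 0
        simp at this
      have := Submodule.finrank_lt this.ne
      simp at this ⊢
      omega
    | insert j S hj ih =>
      obtain ⟨h1, h2⟩ := finrank_step c hc β hβ hmin S j hj
      by_cases hjN : j ∈ N
      · have := h2 (hN j hjN)
        rw [Finset.insert_inter_of_mem hjN, Finset.card_insert_of_notMem (by simp [hj])]
        omega
      · rw [Finset.insert_inter_of_notMem hjN]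
        omega
  have h := main Finset.univ
  have h0 : 0 < Module.finrank K (relSp c Finset.univ) := by
    rw [Module.finrank_pos_iff_exists_ne_zero]
    exact ⟨⟨β, hβ⟩, by simpa [Subtype.ext_iff] using hβ0⟩
  simp at h
  omega

/-- The product polynomial attached to a gate. -/
noncomputable def gatePoly {F : Type*} [Field F] (c : (j : Fin d) → Fin (n j) → F) :
    MvPolynomial ((j : Fin d) × Fin (n j)) F :=
  ∏ j : Fin d, ∑ t : Fin (n j), C (c j t) * X ⟨j, t⟩

lemma gate_bound {F : Type*} [Field F] [Nonempty ι]
    (c : ι → (j : Fin d) → Fin (n j) → F) (hc : ∀ a j, c a j ≠ 0)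
    (ε : ι → F) (hε : ε ≠ 0)
    (h0 : ∑ a, C (ε a) * gatePoly (c a) = 0)
    (hmin : ∀ A : ι → Prop, ∀ [DecidablePred A], (∃ a, A a) → (∃ a, ¬ A a) →
      ∑ a, (if A a then C (ε a) * gatePoly (c a) else 0) ≠ 0)
    (N : Finset (Fin d)) (hN : ∀ j ∈ N, ∃ a b s t, c a j s * c b j t ≠ c a j t * c b j s) :
    N.card + 2 ≤ Fintype.card ι := by
  classical
  let K := AlgebraicClosure F
  have hinj : Function.Injective (algebraMap F K) := (algebraMap F K).injective
  have : Infinite K := IsAlgClosed.instInfinite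
  let cK : ι → (j : Fin d) → Fin (n j) → K := fun a j t => algebraMap F K (c a j t)
  have hrel : ∀ e : ι → F, (fun a => algebraMap F K (e a)) ∈ relSp cK Finset.univ ↔
      ∑ a, C (e a) * gatePoly (c a) = 0 := by
    intro e
    have hev : ∀ v : (j : Fin d) → Fin (n j) → K,
        eval (fun x => v x.1 x.2) (map (algebraMap F K) (∑ a, C (e a) * gatePoly (c a)))
        = ∑ a, algebraMap F K (e a) * ∏ j, lfEval cK a j (v j) := by
      intro v
      simp [gatePoly, lfEval, cK, map_sum, map_prod]
    rw [mem_relSp]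
    constructor
    · intro h
      apply MvPolynomial.map_injective _ hinj
      apply MvPolynomial.funext
      intro w
      have := hev (fun j t => w ⟨j, t⟩)
      rw [map_zero, map_zero, ← h (fun j t => w ⟨j, t⟩)]
      exact this
    · intro h v
      rw [← hev, h]; simp
  refine card_bound cK ?_ (fun a => algebraMap F K (ε a)) ?_ ((hrel ε).2 h0) ?_ N ?_
  · intro a j h
    apply hc a j
    ext t
    apply hinj
    simpa [cK] using congrFun h t
  · intro h
    apply hε
    ext a
    apply hinj
    simpa using congrFun h a
  · intro A _ h1 h2 hm
    apply hmin A h1 h2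
    refine Eq.trans ?_ ((hrel (fun a => if A a then ε a else 0)).1 ?_)
    · refine Finset.sum_congr rfl fun a _ => ?_
      split_ifs <;> simp
    · convert hm using 1
      ext a
      by_cases h : A a <;> simp [h]
  · intro j hj
    obtain ⟨a, b, s, t, h⟩ := hN j hj
    refine ⟨a, b, s, t, fun h' => h (hinj ?_)⟩
    simpa [cK] using h'

lemma lin_homog {F : Type*} [Field F] (c : (j : Fin d) → Fin (n j) → F) (j : Fin d) :
    (∑ t : Fin (n j), C (c j t) * X (R := F) (⟨j, t⟩ : (j : Fin d) × Fin (n j))).IsHomogeneous 1 := by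
  apply IsHomogeneous.sum
  intro t _
  simpa using (isHomogeneous_C _ (c j t)).mul (isHomogeneous_X F (⟨j, t⟩ : (j : Fin d) × Fin (n j)))

lemma lin_ne {F : Type*} [Field F] (c : (j : Fin d) → Fin (n j) → F) (j : Fin d) (h : c j ≠ 0) :
    (∑ t : Fin (n j), C (c j t) * X (R := F) (⟨j, t⟩ : (j : Fin d) × Fin (n j))) ≠ 0 := by
  classical
  intro h0
  apply h
  ext t
  have := congrArg (eval (Pi.single (⟨j, t⟩ : (j : Fin d) × Fin (n j)) (1 : F))) h0
  simpa [Pi.single_apply] using this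

lemma prod_deg {F : Type*} [Field F] (c : (j : Fin d) → Fin (n j) → F) (h : ∀ j, c j ≠ 0)
    (S : Finset (Fin d)) :
    (∏ j ∈ S, ∑ t : Fin (n j), C (c j t) * X (R := F) (⟨j, t⟩ : (j : Fin d) × Fin (n j))).totalDegree
      = S.card := by
  have := (IsHomogeneous.prod S (fun j => ∑ t : Fin (n j),
    C (c j t) * X (R := F) (⟨j, t⟩ : (j : Fin d) × Fin (n j))) (fun _ => 1)
    (fun j _ => lin_homog c j)).totalDegree (Finset.prod_ne_zero_iff.2 fun j _ => lin_ne c j (h j))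
  simpa using this

end Helpers

/-- If C = T_1 + ⋯ + T_k and C' = T'_1 + ⋯ + T'_{k'} are set-multilinear ΣΠΣ
circuits (same partition) computing the same polynomial, k' ≤ k, and C is minimal (no nonempty
subset of its gates sums to zero), then every gate T_i of C has a gate T'_j of C' with
`max(deg T_i, deg T'_j) − deg(gcd(T_i,T'_j)) ≤ k + k' − 2`, expressed via a common divisor g
(equivalent since every common divisor divides the gcd in the UFD F[X]). -/
theorem stmt_2 {F : Type*} [Field F] {d k k' : ℕ} (hd : 1 ≤ d) (hkk : k' ≤ k)
    {n : Fin d → ℕ}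
    (c : Fin k → (j : Fin d) → Fin (n j) → F) (hc : ∀ i j, c i j ≠ 0)
    (c' : Fin k' → (j : Fin d) → Fin (n j) → F) (hc' : ∀ i j, c' i j ≠ 0)
    (T : Fin k → MvPolynomial ((j : Fin d) × Fin (n j)) F)
    (T' : Fin k' → MvPolynomial ((j : Fin d) × Fin (n j)) F)
    (hT : ∀ i, T i = ∏ j : Fin d, ∑ t : Fin (n j), C (c i j t) * X ⟨j, t⟩)
    (hT' : ∀ i, T' i = ∏ j : Fin d, ∑ t : Fin (n j), C (c' i j t) * X ⟨j, t⟩)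
    (hsame : (∑ i, T i) = ∑ i, T' i)
    (hmin : ∀ U : Finset (Fin k), U.Nonempty → (∑ i ∈ U, T i) ≠ 0) :
    ∀ i : Fin k, ∃ j : Fin k', ∃ g : MvPolynomial ((j : Fin d) × Fin (n j)) F,
      g ∣ T i ∧ g ∣ T' j ∧
      max (T i).totalDegree (T' j).totalDegree - g.totalDegree ≤ k + k' - 2 := by
  classical
  intro i
  let cc : Fin k ⊕ Fin k' → (j : Fin d) → Fin (n j) → F := Sum.elim c c'
  have hcc : ∀ a j, cc a j ≠ 0 := by
    rintro (a | a) j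
    · exact hc a j
    · exact hc' a j
  let ε : Fin k ⊕ Fin k' → F := Sum.elim (fun _ => 1) (fun _ => -1)
  let G : Fin k ⊕ Fin k' → MvPolynomial ((j : Fin d) × Fin (n j)) F :=
    fun x => C (ε x) * gatePoly (cc x)
  have hGl : ∀ a, G (Sum.inl a) = T a := by
    intro a; simp [G, ε, cc, hT, gatePoly]
  have hGr : ∀ a, G (Sum.inr a) = - T' a := by
    intro a; simp [G, ε, cc, hT', gatePoly]
  obtain ⟨S, hS, hSmin⟩ := Finset.exists_min_image
    (Finset.univ.filter fun S : Finset (Fin k ⊕ Fin k') => Sum.inl i ∈ S ∧ ∑ x ∈ S, G x = 0)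
    Finset.card ⟨Finset.univ, by simp [Fintype.sum_sum_type, hGl, hGr, hsame]⟩
  simp only [Finset.mem_filter, Finset.mem_univ, true_and] at hS hSmin
  obtain ⟨hiS, hS0⟩ := hS
  obtain ⟨j, hj⟩ : ∃ j, Sum.inr j ∈ S := by
    by_contra hcon
    push Not at hcon
    apply hmin (Finset.univ.filter fun a => Sum.inl a ∈ S) ⟨i, by simpa using hiS⟩
    rw [← hS0, ← Finset.sum_filter_add_sum_filter_not S (fun x => x.isLeft)]
    have e1 : ∑ x ∈ S with ¬ x.isLeft = true, G x = 0 := by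
      apply Finset.sum_eq_zero
      rintro (x | x) hx
      · simp at hx
      · simp only [Finset.mem_filter] at hx
        exact absurd hx.1 (hcon x)
    rw [e1, add_zero]
    refine Finset.sum_bij (fun a _ => Sum.inl a) ?_ ?_ ?_ ?_
    · intro a ha; simpa using ha
    · intro a _ b _ h; simpa using h
    · rintro (b | b) hb
      · exact ⟨b, by simpa using hb, rfl⟩
      · simp at hb
    · intro a _; rw [hGl]
  have hsub : ∀ U ⊆ S, U.Nonempty → U ≠ S → ∑ x ∈ U, G x ≠ 0 := by
    intro U hU hne hneq h0
    have hlt : U.card < S.card := Finset.card_lt_card (hU.ssubset_of_ne hneq)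
    by_cases hi : Sum.inl i ∈ U
    · have := hSmin U ⟨hi, h0⟩
      omega
    · have h1 := Finset.sum_sdiff hU (f := G)
      rw [h0, add_zero, hS0] at h1
      have := hSmin (S \ U) ⟨by simp [hiS, hi], h1⟩
      rw [Finset.card_sdiff_of_subset hU] at this
      have := hne.card_pos
      omega
  let N : Finset (Fin d) :=
    Finset.univ.filter fun l => ∃ s t, c i l s * c' j l t ≠ c i l t * c' j l s
  haveI : Nonempty S := ⟨⟨_, hiS⟩⟩
  have hcard : N.card + 2 ≤ Fintype.card S := by
    refine gate_bound (fun x : S => cc x) (fun a l => hcc a l) (fun x : S => ε x) ?_ ?_ ?_ N ?_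
    · intro h
      simpa [ε] using congrFun h ⟨_, hiS⟩
    · exact (Finset.sum_coe_sort S G).trans hS0
    · rintro A _ ⟨a, ha⟩ ⟨b, hb⟩ h0
      refine hsub ((Finset.univ.filter A).map (Function.Embedding.subtype _)) ?_ ?_ ?_ ?_
      · intro x hx
        simp only [Finset.mem_map] at hx
        obtain ⟨y, -, rfl⟩ := hx
        exact y.2
      · exact ⟨a, Finset.mem_map.2 ⟨a, by simpa using ha, rfl⟩⟩
      · intro h
        have : (b : Fin k ⊕ Fin k') ∈
            (Finset.univ.filter A).map (Function.Embedding.subtype _) := h.symm ▸ b.2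
        obtain ⟨y, hy, hyb⟩ := Finset.mem_map.1 this
        have : y = b := Subtype.ext hyb
        subst this
        simp at hy
        exact hb hy
      · rw [Finset.sum_map, Finset.sum_filter]
        exact h0
    · intro l hl
      obtain ⟨s, t, h⟩ := (Finset.mem_filter.1 hl).2
      exact ⟨⟨_, hiS⟩, ⟨_, hj⟩, s, t, h⟩
  have hSc : Fintype.card S ≤ k + k' := by
    rw [Fintype.card_coe]
    simpa using Finset.card_le_univ S
  refine ⟨j, ∏ l ∈ Nᶜ, ∑ t : Fin (n l), C (c i l t) * X ⟨l, t⟩, ?_, ?_, ?_⟩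
  · rw [hT]
    exact Finset.prod_dvd_prod_of_subset _ _ _ (Finset.subset_univ _)
  · rw [hT']
    refine dvd_trans ?_ (Finset.prod_dvd_prod_of_subset _ _ _ (Finset.subset_univ Nᶜ))
    refine Finset.prod_dvd_prod_of_dvd _ _ fun l hl => ?_
    simp only [N, Finset.mem_compl, Finset.mem_filter, Finset.mem_univ, true_and] at hl
    push Not at hl
    obtain ⟨s, hs⟩ := Function.ne_iff.1 (hc i l)
    simp only [Pi.zero_apply] at hs
    refine ⟨C (c' j l s / c i l s), ?_⟩
    rw [Finset.sum_mul]
    refine Finset.sum_congr rfl fun t _ => ?_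
    have : c' j l t = c i l t * (c' j l s / c i l s) := by
      field_simp
      linear_combination hl s t
    rw [this, C_mul]; ring
  · rw [hT, hT', prod_deg _ (hc i), prod_deg _ (hc' j), prod_deg _ (hc i), max_self,
      Finset.card_univ, Finset.card_compl]
    have := Finset.card_le_univ N
    omega
end

section
/- Let f_1, …, f_k ∈ F[x_1,…,x_n] be F-linearly independent polynomials. Introduce k pairwise disjoint blocks of fresh variables X_1, …, X_k, each block being a copy of (x_1,…,x_n), and let Q be the k×k matrix over the polynomial ring F[X_1,…,X_k] whose (i,j) entry is f_j evaluated at the variable block X_i. Then det(Q) is a nonzero polynomial. -/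
open MvPolynomial

theorem aux_points {F ι : Type*} [Field F] {k : ℕ} (g : Fin k → ι → F)
    (h : LinearIndependent F g) :
    ∃ x : Fin k → ι, (Matrix.of fun i j : Fin k => g j (x i)).det ≠ 0 := by
  have hspan : Submodule.span F (Set.range fun (y : ι) (j : Fin k) => g j y) = ⊤ := by
    by_contra hne
    obtain ⟨φ, hφ, hle⟩ := Submodule.exists_le_ker_of_lt_top _ (lt_top_iff_ne_top.2 hne)
    apply hφ
    have h0 := Fintype.linearIndependent_iff.1 h (fun j => φ (fun l => if j = l then 1 else 0)) (by
      funext y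
      have := hle (Submodule.subset_span ⟨y, rfl⟩)
      rw [LinearMap.mem_ker, LinearMap.pi_apply_eq_sum_univ] at this
      simpa [mul_comm] using this)
    ext v
    rw [LinearMap.comp_apply]
    rw [LinearMap.pi_apply_eq_sum_univ]
    simp [h0]
  obtain ⟨v, hv, -, hli⟩ := Submodule.exists_fun_fin_finrank_span_eq F
    (Set.range fun (y : ι) (j : Fin k) => g j y)
  have hk : Module.finrank F (Submodule.span F (Set.range fun (y : ι) (j : Fin k) => g j y)) = k := by
    rw [hspan]; simp
  choose y hy using hv
  refine ⟨fun i => y (Fin.cast hk.symm i), ?_⟩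
  have hli' := hli.comp (Fin.cast hk.symm) (Fin.cast_injective _)
  have hu := (Matrix.linearIndependent_rows_iff_isUnit
    (A := Matrix.of fun i j : Fin k => g j (y (Fin.cast hk.symm i)))).1 (by
      have he : (Matrix.of fun i j : Fin k => g j (y (Fin.cast hk.symm i))).row
          = v ∘ Fin.cast hk.symm := by
        funext i
        exact hy _
      rw [he]
      exact hli')
  exact ((Matrix.isUnit_iff_isUnit_det _).1 hu).ne_zero

theorem aux_coeff {F : Type*} [Field F] {n k : ℕ}
    (p : Fin k → MvPolynomial (Fin n) F) (x : Fin k → (Fin n →₀ ℕ)) :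
    coeff (Finsupp.equivFunOnFinite.symm fun q : Fin k × Fin n => x q.1 q.2)
      (∏ i, (rename (fun t : Fin n => ((i, t) : Fin k × Fin n)) (p i) :
          MvPolynomial (Fin k × Fin n) F)) = ∏ i, coeff (x i) (p i) := by
  have h1 : ∀ i, (rename (fun t : Fin n => ((i, t) : Fin k × Fin n)) (p i) :
          MvPolynomial (Fin k × Fin n) F) = ∑ d ∈ insert (x i) (p i).support,
          monomial (Finsupp.mapDomain (fun t : Fin n => ((i, t) : Fin k × Fin n)) d) (coeff d (p i)) := by
    intro i
    conv_lhs => rw [(p i).as_sum]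
    rw [map_sum]
    simp_rw [rename_monomial]
    apply Finset.sum_subset (Finset.subset_insert _ _)
    intro d _ hd
    rw [notMem_support_iff.1 hd, monomial_zero]
  have h2 : ∀ d : Fin k → (Fin n →₀ ℕ), ∀ q : Fin k × Fin n,
      (∑ i, Finsupp.mapDomain (fun t : Fin n => ((i, t) : Fin k × Fin n)) (d i)) q = d q.1 q.2 := by
    rintro d ⟨a, b⟩
    rw [Finsupp.finsetSum_apply, Finset.sum_eq_single a]
    · exact Finsupp.mapDomain_apply (fun _ _ h => (Prod.mk.inj h).2) _ _
    · intro i _ hi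
      apply Finsupp.mapDomain_of_notMem_range
      rintro ⟨t, ht⟩
      exact hi (Prod.mk.inj ht).1
    · simp
  simp_rw [h1]
  rw [Finset.prod_univ_sum, coeff_sum, Finset.sum_eq_single x]
  · rw [← monomial_sum_prod, coeff_monomial, if_pos]
    ext q
    rw [h2]
    rfl
  · intro d _ hd
    rw [← monomial_sum_prod, coeff_monomial, if_neg]
    intro he
    apply hd
    funext i
    ext t
    have := h2 d (i, t)
    rw [he] at this
    exact this.symm
  · intro h
    exact absurd (Fintype.mem_piFinset.2 fun i => Finset.mem_insert_self _ _) h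

/-- For F-linearly independent polynomials f_1, …, f_k ∈ F[x_1,…,x_n], the
k×k matrix Q over F[X_1,…,X_k] (k disjoint fresh copies of the variables) with entries
Q_{ij} = f_j(X_i) has nonzero determinant. -/
theorem stmt_4 {F : Type*} [Field F] {n k : ℕ}
    (f : Fin k → MvPolynomial (Fin n) F) (hind : LinearIndependent F f) :
    (Matrix.of fun i j : Fin k =>
        (rename (fun t : Fin n => ((i, t) : Fin k × Fin n)) (f j) :
          MvPolynomial (Fin k × Fin n) F)).det ≠ 0 := by
  obtain ⟨x, hx⟩ := aux_points (fun j (m : Fin n →₀ ℕ) => coeff m (f j)) (by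
    rw [Fintype.linearIndependent_iff] at hind ⊢
    intro c hc
    apply hind c
    ext m
    simpa [coeff_sum] using congrFun hc m)
  intro h
  apply hx
  have h' := congrArg (coeff (Finsupp.equivFunOnFinite.symm fun q : Fin k × Fin n => x q.1 q.2)) h
  rw [← Matrix.det_transpose, Matrix.det_apply, coeff_sum] at h'
  rw [← Matrix.det_transpose, Matrix.det_apply]
  rw [coeff_zero] at h'
  rw [← h']
  refine Finset.sum_congr rfl fun σ _ => ?_
  simp only [Matrix.transpose_apply, Matrix.of_apply]
  rw [← aux_coeff (fun i => f (σ i)) x]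
  rcases Int.units_eq_one_or (Equiv.Perm.sign σ) with h | h <;> simp [h]
end

section
/- Let f_1, …, f_k ∈ F[x_1,…,x_n] be F-linearly independent polynomials, each of total degree at most d, and let S ⊆ F be a finite nonempty set. If a_1, …, a_k are chosen independently and uniformly at random from S^n, then the probability that the k×k matrix M with entries M_{ij} = f_j(a_i) is NOT invertible is at most kd/|S|. -/
open MvPolynomial
open scoped Classical

lemma aux_det_ne_zero {F : Type*} [Field F] {n : ℕ} : ∀ {k : ℕ}
    (f : Fin k → MvPolynomial (Fin n) F) (_ : LinearIndependent F f),
    (Matrix.of fun i j : Fin k => rename (fun x : Fin n => (i, x)) (f j)).det ≠ 0 := by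
  intro k
  induction k with
  | zero => intro f _; simp
  | succ k ih =>
    intro f hf h0
    let φ : MvPolynomial (Fin (k+1) × Fin n) F →ₐ[F]
        MvPolynomial (Fin n) (MvPolynomial (Fin k × Fin n) F) :=
      aeval (fun p => Fin.cases (motive := fun _ => MvPolynomial (Fin n) (MvPolynomial (Fin k × Fin n) F)) (X p.2) (fun i => C (X (i, p.2))) p.1)
    have hφ0 : ∀ g : MvPolynomial (Fin n) F,
        φ (rename (fun x : Fin n => ((0 : Fin (k+1)), x)) g) = map C g := by
      intro g
      simp only [φ, aeval_rename]
      induction g using MvPolynomial.induction_on with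
      | C a => simp
      | add p q hp hq => simp [hp, hq]
      | mul_X p i hp => simp [hp]
    have hφs : ∀ (i : Fin k) (g : MvPolynomial (Fin n) F),
        φ (rename (fun x : Fin n => (i.succ, x)) g) = C (rename (fun x => (i, x)) g) := by
      intro i g
      simp only [φ, aeval_rename]
      induction g using MvPolynomial.induction_on with
      | C a => simp
      | add p q hp hq => simp [hp, hq]
      | mul_X p i hp => simp [hp]
    let m : Fin (k+1) → MvPolynomial (Fin k × Fin n) F := fun j =>
      (Matrix.of fun i l : Fin k => rename (fun x : Fin n => (i, x)) (f (j.succAbove l))).det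
    have hm : m 0 ≠ 0 := ih (fun l => f ((0 : Fin (k+1)).succAbove l))
      (hf.comp _ Fin.succAbove_right_injective)
    obtain ⟨s, hs⟩ := MvPolynomial.ne_zero_iff.1 hm
    have h1 : ∑ j : Fin (k+1), (-1) ^ (j : ℕ) * map C (f j) * C (m j) = 0 := by
      have h2 := congrArg φ h0
      rw [Matrix.det_succ_row_zero, map_sum, map_zero] at h2
      rw [← h2]
      refine Finset.sum_congr rfl fun j _ => ?_
      rw [map_mul, map_mul, map_pow, map_neg, map_one]
      congr 1
      · congr 1
        exact (hφ0 _).symm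
      · rw [AlgHom.map_det, RingHom.map_det]
        congr 1
        ext1 i l
        simp [hφs]
    have h3 : ∑ j : Fin (k+1), ((-1) ^ (j : ℕ) * coeff s (m j)) • f j = 0 := by
      ext t
      have h4 := congrArg (fun p => coeff s (coeff t p)) h1
      simp only [coeff_sum, coeff_zero] at h4
      rw [coeff_sum, coeff_zero, ← h4]
      refine Finset.sum_congr rfl fun j _ => ?_
      have : ((-1 : MvPolynomial (Fin n) (MvPolynomial (Fin k × Fin n) F)) ^ (j : ℕ))
          = C (C ((-1) ^ (j : ℕ))) := by simp
      rw [this, mul_comm _ (C (m j)), coeff_C_mul, coeff_C_mul, coeff_map, mul_comm (m j), mul_assoc,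
        coeff_C_mul, coeff_C_mul,
        coeff_smul, smul_eq_mul]
      ring
    have h5 := Fintype.linearIndependent_iff.1 hf _ h3 0
    simp at h5
    exact hs h5

lemma aux_det_degree {F : Type*} [Field F] {n k d : ℕ}
    (f : Fin k → MvPolynomial (Fin n) F)
    (hdeg : ∀ j, (f j).totalDegree ≤ d) :
    (Matrix.of fun i j : Fin k => rename (fun x : Fin n => (i, x)) (f j)).det.totalDegree
      ≤ k * d := by
  rw [Matrix.det_apply]
  refine totalDegree_finsetSum_le fun σ _ => ?_
  have h : (∏ i, (Matrix.of fun i j : Fin k => rename (fun x : Fin n => (i, x)) (f j)) (σ i) i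
      ).totalDegree ≤ k * d := by
    refine (totalDegree_finsetProd _ _).trans ?_
    refine (Finset.sum_le_sum (g := fun _ => d) fun i _ => ?_).trans (by simp)
    exact (totalDegree_rename_le _ _).trans (hdeg i)
  rcases Int.units_eq_one_or (Equiv.Perm.sign σ) with h1 | h1 <;> rw [h1]
  · simpa using h
  · simpa [Units.neg_smul, totalDegree_neg] using h

/-- For F-linearly independent f_1, …, f_k of total degree ≤ d and a finite
nonempty S ⊆ F, if a_1, …, a_k are independent uniform points of S^n then the probability that
the matrix (f_j(a_i))_{ij} is NOT invertible is at most kd/|S|.  Probability is expressed by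
counting over the sample space Ω = (S^n)^k of tuples of points. -/
theorem stmt_5 {F : Type*} [Field F] {n k d : ℕ}
    (f : Fin k → MvPolynomial (Fin n) F)
    (hdeg : ∀ j, (f j).totalDegree ≤ d)
    (hind : LinearIndependent F f)
    (S : Finset F) (hS : S.Nonempty) :
    (((Fintype.piFinset fun _ : Fin k => Fintype.piFinset fun _ : Fin n => S).filter
        (fun a : Fin k → Fin n → F =>
          ¬ IsUnit (Matrix.of fun i j : Fin k => eval (a i) (f j)))).card : ℝ)
      / ((Fintype.piFinset fun _ : Fin k => Fintype.piFinset fun _ : Fin n => S).card : ℝ)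
      ≤ (k * d : ℝ) / (S.card : ℝ) := by
  set P := (Matrix.of fun i j : Fin k => rename (fun x : Fin n => (i, x)) (f j)).det with hP
  have hP0 : P ≠ 0 := aux_det_ne_zero f hind
  have hPd : P.totalDegree ≤ k * d := aux_det_degree f hdeg
  set Q := rename (finProdFinEquiv : Fin k × Fin n ≃ Fin (k * n)) P with hQ
  have hQ0 : Q ≠ 0 := by
    intro h
    apply hP0
    apply rename_injective _ (finProdFinEquiv : Fin k × Fin n ≃ Fin (k * n)).injective
    rw [map_zero]; exact h
  have hQd : Q.totalDegree ≤ k * d := (totalDegree_rename_le _ _).trans hPd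
  have hsz := schwartz_zippel_totalDegree hQ0 S
  have hev : ∀ b : Fin (k * n) → F, eval b Q =
      (Matrix.of fun i j : Fin k =>
        eval (fun x => b (finProdFinEquiv (i, x))) (f j)).det := by
    intro b
    rw [hQ, eval_rename, hP, RingHom.map_det]
    congr 1
    ext i j
    simp [eval_rename, Function.comp_def]
  have hcard : ((Fintype.piFinset fun _ : Fin k => Fintype.piFinset fun _ : Fin n => S).filter
        (fun a : Fin k → Fin n → F =>
          ¬ IsUnit (Matrix.of fun i j : Fin k => eval (a i) (f j)))).card =
      ((Fintype.piFinset fun _ : Fin (k * n) => S).filter (fun b => eval b Q = 0)).card := by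
    symm
    refine Finset.card_equiv
      ((Equiv.arrowCongr finProdFinEquiv.symm (Equiv.refl F)).trans (Equiv.curry _ _ _)) ?_
    intro b
    simp only [Finset.mem_filter, Fintype.mem_piFinset, Matrix.isUnit_iff_isUnit_det,
      isUnit_iff_ne_zero, not_not, hev]
    refine and_congr ?_ ?_
    · constructor
      · intro h i x
        exact h _
      · intro h y
        obtain ⟨⟨i, x⟩, rfl⟩ := finProdFinEquiv.surjective y
        exact h i x
    · rfl
  have hcard2 : (Fintype.piFinset fun _ : Fin k => Fintype.piFinset fun _ : Fin n => S).card
      = S.card ^ (k * n) := by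
    simp [← pow_mul, mul_comm]
  rw [hcard, hcard2]
  have h1 := hsz.trans (div_le_div_of_nonneg_right
    (show (Q.totalDegree : ℚ≥0) ≤ (k * d : ℚ≥0) by exact_mod_cast hQd) (zero_le (a := (S.card : ℚ≥0))))
  have h2 : (((_ : ℚ≥0) : ℝ)) ≤ ((_ : ℚ≥0) : ℝ) := NNRat.cast_le.2 h1
  push_cast at h2 ⊢
  exact h2
end

section
/- Let F be a field, let C ⊆ F[x_1,…,x_n] be a set of polynomials, let k ≥ 1, and let H ⊆ F^n be a set of points such that every nonzero polynomial of the form c_1 g_1 + ⋯ + c_k g_k with c_1,…,c_k ∈ F and g_1,…,g_k ∈ C has a nonzero evaluation at some point of H (i.e., H is a hitting set for F-linear combinations of at most k elements of C). Then for every choice of F-linearly independent polynomials f_1, …, f_k ∈ C, there exist points a_1, …, a_k ∈ H such that the k×k matrix with (i,j) entry f_j(a_i) is invertible. -/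
/-- If H is a hitting set for F-linear combinations of at most k elements of a
class 𝒞 ⊆ F[x_1,…,x_n] (every nonzero combination c_1 g_1 + ⋯ + c_k g_k with g_i ∈ 𝒞 has a
nonzero evaluation on H), then for all F-linearly independent f_1, …, f_k ∈ 𝒞 there are points
a_1, …, a_k ∈ H making the matrix (f_j(a_i))_{ij} invertible. -/
theorem stmt_6 {F : Type*} [Field F] {n k : ℕ} (hk : 1 ≤ k)
    (𝒞 : Set (MvPolynomial (Fin n) F)) (H : Set (Fin n → F))
    (hH : ∀ (c : Fin k → F) (g : Fin k → MvPolynomial (Fin n) F),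
      (∀ i, g i ∈ 𝒞) → (∑ i, MvPolynomial.C (c i) * g i) ≠ 0 →
      ∃ a ∈ H, MvPolynomial.eval a (∑ i, MvPolynomial.C (c i) * g i) ≠ 0)
    (f : Fin k → MvPolynomial (Fin n) F) (hf : ∀ i, f i ∈ 𝒞)
    (hind : LinearIndependent F f) :
    ∃ a : Fin k → (Fin n → F), (∀ i, a i ∈ H) ∧
      IsUnit (Matrix.of fun i j : Fin k => MvPolynomial.eval (a i) (f j)) := by
  classical
  let v : (Fin n → F) → (Fin k → F) := fun a j => MvPolynomial.eval a (f j)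
  have hspan : Submodule.span F (v '' H) = ⊤ := by
    by_contra hne
    obtain ⟨φ, hφ, hle⟩ := Submodule.exists_le_ker_of_lt_top _ (lt_top_iff_ne_top.mpr hne)
    have hφv : ∀ w : Fin k → F, φ w = ∑ i, φ (Pi.single i 1) * w i := by
      intro w
      conv_lhs => rw [pi_eq_sum_univ' w]
      rw [map_sum]
      refine Finset.sum_congr rfl fun i _ => ?_
      rw [map_smul, smul_eq_mul, mul_comm]
    by_cases h0 : (∑ i, MvPolynomial.C (φ (Pi.single i 1)) * f i) = 0
    · have hz := Fintype.linearIndependent_iff.mp hind (fun i => φ (Pi.single i 1))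
        (by simpa [MvPolynomial.smul_eq_C_mul] using h0)
      apply hφ
      ext w
      simp [hz]
    · obtain ⟨a, ha, hne0⟩ := hH _ f hf h0
      apply hne0
      have hm : φ (v a) = 0 := hle (Submodule.subset_span ⟨a, ha, rfl⟩)
      rw [hφv] at hm
      simpa [v] using hm
  obtain ⟨b, hb, hbs, hli⟩ := exists_linearIndependent F (v '' H)
  rw [hspan] at hbs
  let B := Module.Basis.mk hli (by simp [hbs])
  let e : b ≃ Fin k := B.indexEquiv (Pi.basisFun F (Fin k))
  choose a ha hav using fun i : Fin k => hb (e.symm i).2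
  refine ⟨a, ha, ?_⟩
  rw [← Matrix.linearIndependent_rows_iff_isUnit]
  have h2 := hli.comp e.symm e.symm.injective
  have h3 : (Matrix.of fun i j : Fin k => MvPolynomial.eval (a i) (f j)).row
      = Subtype.val ∘ e.symm := by
    funext i
    exact hav i
  rw [h3]
  exact h2
end

section
/- Let f_1, …, f_m ∈ F[x_1,…,x_n] be polynomials of total degree at most d whose F-linear span has dimension k, and let S ⊆614 F be a finite nonempty set with S ⊆ F. If a_1, …, a_k are chosen independently and uniformly at random from S^n, then with probability at least 1 − (m choose k)·kd/|S| the following holds: for every λ = (λ_1,…,λ_m) ∈ F^m, one has λ_1 f_1 + ⋯ + λ_m f_m = 0 as a polynomial if and only if λ_1 f_1(a_i) + ⋯ + λ_m f_m(a_i) = 0 for all i ∈ {1,…,k}. In other words, the F-linear dependencies among the columns of the k×m evaluation matrix (f_j(a_i)) coincide exactly with the F-linear dependencies among f_1, …, f_m. -/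
open MvPolynomial
open scoped Classical

lemma bad_card_aux {F : Type*} [Field F] {n d : ℕ} (S : Finset F) (hS : S.Nonempty) :
    ∀ (k : ℕ) (V : Submodule F (MvPolynomial (Fin n) F)), FiniteDimensional F V →
      Module.finrank F V = k → (∀ p ∈ V, p.totalDegree ≤ d) →
      ((Fintype.piFinset fun _ : Fin k => Fintype.piFinset fun _ : Fin n => S).filter
        (fun a : Fin k → Fin n → F => ∃ p ∈ V, p ≠ 0 ∧ ∀ i, eval (a i) p = 0)).card * S.card
        ≤ k * d * (Fintype.piFinset fun _ : Fin n => S).card ^ k := by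
  intro k
  induction k with
  | zero =>
    intro V hfd hV _
    have hbot : V = ⊥ := Submodule.finrank_eq_zero.mp hV
    subst hbot
    have : ((Fintype.piFinset fun _ : Fin 0 => Fintype.piFinset fun _ : Fin n => S).filter
        (fun a : Fin 0 → Fin n → F => ∃ p ∈ (⊥ : Submodule F (MvPolynomial (Fin n) F)),
          p ≠ 0 ∧ ∀ i, eval (a i) p = 0)) = ∅ := by
      apply Finset.filter_eq_empty_iff.mpr
      rintro a - ⟨p, hp, hp0, -⟩
      exact hp0 (by simpa using hp)
    rw [this]
    simp
  | succ k ih =>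
    intro V hfd hV hdeg
    set T := Fintype.piFinset fun _ : Fin n => S with hT
    have hne : V ≠ ⊥ := by
      rintro rfl
      simp at hV
    obtain ⟨p, hpV, hp0⟩ := Submodule.exists_mem_ne_zero_of_ne_bot hne
    have hScard : 0 < S.card := hS.card_pos
    -- the Schwartz-Zippel bound
    have hSZ : (T.filter fun b => eval b p = 0).card * S.card ≤ d * T.card := by
      have h := schwartz_zippel_totalDegree hp0 S
      have hTc : T.card = S.card ^ n := by simp [hT]
      have h1 : (0 : ℚ≥0) < S.card := by exact_mod_cast hScard
      rw [div_le_div_iff₀ (by positivity) h1] at h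
      have h2 : (T.filter fun b => eval b p = 0).card * S.card
          ≤ p.totalDegree * S.card ^ n := by
        rw [hT]
        exact_mod_cast h
      rw [hTc]
      exact h2.trans (Nat.mul_le_mul_right _ (hdeg p hpV))
    set B := (Fintype.piFinset fun _ : Fin (k+1) => T).filter
        (fun a : Fin (k+1) → Fin n → F => ∃ p ∈ V, p ≠ 0 ∧ ∀ i, eval (a i) p = 0) with hB
    have hfib : B.card = ∑ b ∈ T, (B.filter fun a => a 0 = b).card := by
      apply Finset.card_eq_sum_card_fiberwise
      intro a ha
      have ha' := (Finset.mem_filter.mp (Finset.mem_coe.mp ha)).1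
      exact Fintype.mem_piFinset.mp ha' 0
    have hinj : ∀ b, Set.InjOn (fun a : Fin (k+1) → Fin n → F => Fin.tail a)
        (B.filter fun a => a 0 = b : Finset (Fin (k+1) → Fin n → F)) := by
      intro b a ha c hc hac
      have ha' := (Finset.mem_filter.mp (Finset.mem_coe.mp ha)).2
      have hc' := (Finset.mem_filter.mp (Finset.mem_coe.mp hc)).2
      rw [← Fin.cons_self_tail a, ← Fin.cons_self_tail c, ha', hc']
      simp only at hac
      rw [hac]
    have hbound : ∀ b ∈ T, (B.filter fun a => a 0 = b).card * S.card ≤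
        (if eval b p = 0 then T.card ^ k * S.card else 0) + k * d * T.card ^ k := by
      intro b hb
      split_ifs with hpb
      · refine le_trans (Nat.mul_le_mul_right _ ?_) (Nat.le_add_right _ _)
        have : T.card ^ k = (Fintype.piFinset fun _ : Fin k => T).card := by simp
        rw [this]
        refine Finset.card_le_card_of_injOn _ ?_ (hinj b)
        intro a ha
        have ha' := (Finset.mem_filter.mp (Finset.mem_filter.mp (Finset.mem_coe.mp ha)).1).1
        refine Finset.mem_coe.mpr (Fintype.mem_piFinset.mpr fun i => ?_)
        exact Fintype.mem_piFinset.mp ha' i.succ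
      · rw [zero_add]
        let φ : V →ₗ[F] F := (aeval b : MvPolynomial (Fin n) F →ₐ[F] F).toLinearMap.comp V.subtype
        have hφ : ∀ q : V, φ q = eval b (q : MvPolynomial (Fin n) F) := by
          intro q
          simp [φ, aeval_eq_eval]
        let W : Submodule F (MvPolynomial (Fin n) F) := (LinearMap.ker φ).map V.subtype
        have hWfr : Module.finrank F W = k := by
          have h1 : Module.finrank F W = Module.finrank F (LinearMap.ker φ) :=
            (Submodule.equivMapOfInjective V.subtype V.injective_subtype _).finrank_eq.symm
          have h2 := LinearMap.finrank_range_add_finrank_ker φ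
          have h3 : LinearMap.range φ = ⊤ := by
            apply LinearMap.range_eq_top.mpr
            apply LinearMap.surjective
            intro h0
            apply hpb
            rw [← hφ ⟨p, hpV⟩, h0]
            rfl
          rw [h3, finrank_top, Module.finrank_self, hV] at h2
          omega
        have hWV : ∀ q ∈ W, q ∈ V := by
          rintro q ⟨r, -, rfl⟩
          exact r.2
        have hWfd : FiniteDimensional F W := by
          infer_instance
        refine le_trans (Nat.mul_le_mul_right _ ?_)
          (ih W hWfd hWfr (fun q hq => hdeg q (hWV q hq)))
        refine Finset.card_le_card_of_injOn _ ?_ (hinj b)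
        intro a ha
        obtain ⟨haB, ha0⟩ := Finset.mem_filter.mp (Finset.mem_coe.mp ha)
        obtain ⟨haT, q, hqV, hq0, hq⟩ := Finset.mem_filter.mp haB
        refine Finset.mem_coe.mpr (Finset.mem_filter.mpr ⟨Fintype.mem_piFinset.mpr fun i =>
          Fintype.mem_piFinset.mp haT i.succ, q, ?_, hq0, fun i => hq i.succ⟩)
        refine ⟨⟨q, hqV⟩, ?_, rfl⟩
        have := hq 0
        rw [ha0] at this
        exact LinearMap.mem_ker.mpr ((hφ _).trans this)
    calc B.card * S.card = ∑ b ∈ T, (B.filter fun a => a 0 = b).card * S.card := by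
          rw [hfib, Finset.sum_mul]
      _ ≤ ∑ b ∈ T, ((if eval b p = 0 then T.card ^ k * S.card else 0) + k * d * T.card ^ k) :=
          Finset.sum_le_sum hbound
      _ = ((T.filter fun b => eval b p = 0).card * S.card) * T.card ^ k
            + k * d * T.card ^ k * T.card := by
          rw [Finset.sum_add_distrib, ← Finset.sum_filter, Finset.sum_const, Finset.sum_const]
          simp only [smul_eq_mul]
          ring
      _ ≤ (d * T.card) * T.card ^ k + k * d * T.card ^ k * T.card := by gcongr
      _ = (k + 1) * d * T.card ^ (k + 1) := by ring

/-- Let f_1, …, f_m have total degree ≤ d and F-linear span of dimension k,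
and let S ⊆ F be finite nonempty.  Choosing a_1, …, a_k independently and uniformly from S^n,
with probability at least 1 − (m choose k)·kd/|S| the F-linear dependencies among the columns of
the evaluation matrix (f_j(a_i)) coincide exactly with the dependencies among f_1, …, f_m:
for every λ ∈ F^m, Σ_j λ_j f_j = 0 (as a polynomial) iff Σ_j λ_j f_j(a_i) = 0 for all i. -/
theorem stmt_7 {F : Type*} [Field F] {n m d k : ℕ}
    (f : Fin m → MvPolynomial (Fin n) F)
    (hdeg : ∀ j, (f j).totalDegree ≤ d)
    (hrank : Module.finrank F (Submodule.span F (Set.range f)) = k)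
    (S : Finset F) (hS : S.Nonempty) :
    (1 : ℝ) - ((m.choose k) * (k * d) : ℝ) / (S.card : ℝ)
      ≤ (((Fintype.piFinset fun _ : Fin k => Fintype.piFinset fun _ : Fin n => S).filter
            (fun a : Fin k → Fin n → F =>
              ∀ lam : Fin m → F,
                (∑ j, C (lam j) * f j) = 0 ↔ ∀ i, (∑ j, lam j * eval (a i) (f j)) = 0)).card : ℝ)
          / ((Fintype.piFinset fun _ : Fin k => Fintype.piFinset fun _ : Fin n => S).card : ℝ) := by
  set V := Submodule.span F (Set.range f) with hV
  have hfd : FiniteDimensional F V := FiniteDimensional.span_of_finite F (Set.finite_range f)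
  have hdegV : ∀ p ∈ V, p.totalDegree ≤ d := by
    intro p hp
    have hle : V ≤ restrictTotalDegree (Fin n) F d := by
      rw [hV, Submodule.span_le]
      rintro _ ⟨j, rfl⟩
      exact (mem_restrictTotalDegree _ _ _).mpr (hdeg j)
    exact (mem_restrictTotalDegree _ _ _).mp (hle hp)
  have key := bad_card_aux S hS k V hfd hrank hdegV
  have hkm : k ≤ m := by
    rw [← hrank]
    simpa [Set.finrank] using finrank_range_le_card (R := F) f
  have hch : 1 ≤ m.choose k := Nat.choose_pos hkm
  set P := Fintype.piFinset fun _ : Fin k => Fintype.piFinset fun _ : Fin n => S with hP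
  have hPc : P.card = (Fintype.piFinset fun _ : Fin n => S).card ^ k := by simp [hP]
  rw [← hPc] at key
  set G := P.filter (fun a : Fin k → Fin n → F =>
              ∀ lam : Fin m → F,
                (∑ j, C (lam j) * f j) = 0 ↔ ∀ i, (∑ j, lam j * eval (a i) (f j)) = 0) with hG
  set B := P.filter
        (fun a : Fin k → Fin n → F => ∃ p ∈ V, p ≠ 0 ∧ ∀ i, eval (a i) p = 0) with hB
  have hev : ∀ (x : Fin n → F) (lam : Fin m → F),
      eval x (∑ j, C (lam j) * f j) = ∑ j, lam j * eval x (f j) := by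
    intro x lam
    simp [map_sum]
  have hcover : P ⊆ G ∪ B := by
    intro a ha
    rw [Finset.mem_union]
    by_cases hb : ∃ p ∈ V, p ≠ 0 ∧ ∀ i, eval (a i) p = 0
    · exact Or.inr (Finset.mem_filter.mpr ⟨ha, hb⟩)
    · refine Or.inl (Finset.mem_filter.mpr ⟨ha, fun lam => ⟨fun h i => ?_, fun h => ?_⟩⟩)
      · rw [← hev, h, map_zero]
      · by_contra h0
        refine hb ⟨_, ?_, h0, fun i => (hev _ _).trans (h i)⟩
        refine Submodule.sum_mem _ fun j _ => ?_
        rw [← smul_eq_C_mul]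
        exact Submodule.smul_mem _ _ (Submodule.subset_span ⟨j, rfl⟩)
  have hcard : P.card ≤ G.card + B.card :=
    (Finset.card_le_card hcover).trans (Finset.card_union_le _ _)
  have hs : (0 : ℝ) < S.card := by exact_mod_cast hS.card_pos
  have hPpos : (0 : ℝ) < P.card := by
    have : P.Nonempty := Fintype.piFinset_nonempty.mpr fun _ =>
      Fintype.piFinset_nonempty.mpr fun _ => hS
    exact_mod_cast this.card_pos
  have hcardR : (P.card : ℝ) ≤ G.card + B.card := by exact_mod_cast hcard
  have keyR : (B.card : ℝ) * S.card ≤ k * d * P.card := by exact_mod_cast key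
  have hchR : (1 : ℝ) ≤ m.choose k := by exact_mod_cast hch
  have h1 : (B.card : ℝ) / P.card ≤ ((m.choose k) * (k * d) : ℝ) / (S.card : ℝ) := by
    rw [div_le_div_iff₀ hPpos hs]
    refine keyR.trans ?_
    have : (0 : ℝ) ≤ k * d * P.card := by positivity
    nlinarith
  have h2 : (1 : ℝ) ≤ (G.card : ℝ) / P.card + (B.card : ℝ) / P.card := by
    rw [← add_div, le_div_iff₀ hPpos]
    linarith
  linarith
end

section
/- Let C = T_1 + ⋯ + T_k, with T_i = ∏_{j=1}^d ℓ_{i,j} and ℓ_{i,j} a nonzero linear form in X_j, be a set-multilinear ΣΠΣ(k) circuit computing a polynomial f, and suppose f cannot be computed by any set-multilinear ΣΠΣ(k−1) circuit with respect to the same partition (i.e., C has optimal top fan-in). Then for every j ∈ {1,…,d}, the k polynomials T_1/ℓ_{1,j}, T_2/ℓ_{2,j}, …, T_k/ℓ_{k,j} are F-linearly independent. (Each T_i/ℓ_{i,j} is a polynomial since ℓ_{i,j} divides T_i.) -/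
open MvPolynomial

/-- If C = T_1 + ⋯ + T_k, with T_i = ∏_j ℓ_{i,j} and ℓ_{i,j} a nonzero linear
form in block X_j, computes f and f cannot be computed by any set-multilinear ΣΠΣ circuit with
fewer than k gates (optimal top fan-in), then for every block j the k polynomials
T_i/ℓ_{i,j} = ∏_{j' ≠ j} ℓ_{i,j'} are F-linearly independent. -/
theorem stmt_8 {F : Type*} [Field F] {d k : ℕ} (hd : 1 ≤ d)
    {n : Fin d → ℕ}
    (c : Fin k → (j : Fin d) → Fin (n j) → F) (hc : ∀ i j, c i j ≠ 0)
    (T : Fin k → MvPolynomial ((j : Fin d) × Fin (n j)) F)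
    (hT : ∀ i, T i = ∏ j : Fin d, ∑ t : Fin (n j), C (c i j t) * X ⟨j, t⟩)
    (f : MvPolynomial ((j : Fin d) × Fin (n j)) F) (hf : f = ∑ i, T i)
    (hopt : ¬ ∃ (k' : ℕ) (_ : k' < k) (c' : Fin k' → (j : Fin d) → Fin (n j) → F),
        (∀ i j, c' i j ≠ 0) ∧
        f = ∑ i, ∏ j : Fin d, ∑ t : Fin (n j), C (c' i j t) * X ⟨j, t⟩) :
    ∀ j : Fin d, LinearIndependent F
      (fun i : Fin k =>
        ∏ j' ∈ Finset.univ.erase j, ∑ t : Fin (n j'),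
          C (c i j' t) * (X ⟨j', t⟩ : MvPolynomial ((j : Fin d) × Fin (n j)) F)) := by
  classical
  intro j
  rw [Fintype.linearIndependent_iff]
  intro g hg
  by_contra hne
  push Not at hne
  obtain ⟨i0, hi0⟩ := hne
  apply hopt
  let L : (j : Fin d) → (Fin (n j) → F) → MvPolynomial ((j : Fin d) × Fin (n j)) F :=
    fun j v => ∑ t : Fin (n j), C (v t) * X ⟨j, t⟩
  let P : Fin k → MvPolynomial ((j : Fin d) × Fin (n j)) F :=
    fun i => ∏ j' ∈ Finset.univ.erase j, L j' (c i j')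
  let a : Fin k → F := fun i => g i / g i0
  let v : Fin k → Fin (n j) → F := fun i t => c i j t - a i * c i0 j t
  let c'' : Fin k → (j : Fin d) → Fin (n j) → F := fun i => Function.update (c i) j (v i)
  have hP : ∑ i, C (a i) * P i = 0 := by
    have h1 : ∑ i, g i • P i = 0 := hg
    have h2 : ∑ i, C (a i) * P i = C (g i0)⁻¹ * ∑ i, g i • P i := by
      rw [Finset.mul_sum]
      refine Finset.sum_congr rfl fun i _ => ?_
      rw [MvPolynomial.smul_eq_C_mul, ← mul_assoc, ← C_mul, mul_comm (g i0)⁻¹, ← div_eq_mul_inv]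
    rw [h2, h1, mul_zero]
  have hL : ∀ i, L j (v i) = L j (c i j) - C (a i) * L j (c i0 j) := by
    intro i
    simp only [L, v, Finset.mul_sum, ← Finset.sum_sub_distrib]
    refine Finset.sum_congr rfl fun t _ => ?_
    rw [C_sub, C_mul]
    ring
  have hprod : ∀ i, ∏ j', L j' (c'' i j') = L j (v i) * P i := by
    intro i
    rw [← Finset.mul_prod_erase Finset.univ _ (Finset.mem_univ j)]
    congr 1
    · simp [c'']
    · refine Finset.prod_congr rfl fun j' hj' => ?_
      simp [c'', Function.update_of_ne (Finset.ne_of_mem_erase hj')]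
  have hTi : ∀ i, T i = L j (c i j) * P i := by
    intro i
    rw [hT i, ← Finset.mul_prod_erase Finset.univ _ (Finset.mem_univ j)]
  have hfsum : f = ∑ i, ∏ j', L j' (c'' i j') := by
    rw [hf]
    have : ∑ i, ∏ j', L j' (c'' i j') = ∑ i, T i - L j (c i0 j) * ∑ i, C (a i) * P i := by
      rw [Finset.mul_sum, ← Finset.sum_sub_distrib]
      refine Finset.sum_congr rfl fun i _ => ?_
      rw [hprod, hL, hTi]
      ring
    rw [this, hP, mul_zero, sub_zero]
  let S : Finset (Fin k) := Finset.univ.filter fun i => v i ≠ 0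
  have hv0 : v i0 = 0 := by
    funext t
    simp [v, a, div_self hi0]
  have hcard : S.card < k := by
    have : S.card < (Finset.univ : Finset (Fin k)).card := by
      apply Finset.card_lt_card
      refine Finset.ssubset_univ_iff.mpr fun h => ?_
      have := Finset.mem_univ i0
      rw [← h] at this
      exact (Finset.mem_filter.mp this).2 hv0
    simpa using this
  refine ⟨S.card, hcard, fun i => c'' (S.equivFin.symm i), ?_, ?_⟩
  · intro i j'
    by_cases h : j' = j
    · subst h
      simpa [c''] using (Finset.mem_filter.mp (S.equivFin.symm i).2).2
    · simpa [c'', Function.update_of_ne h] using hc _ j'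
  · have h1 : ∑ i, ∏ j', L j' (c'' i j') = ∑ i ∈ S, ∏ j', L j' (c'' i j') := by
      symm
      apply Finset.sum_subset (Finset.subset_univ _)
      intro i _ hi
      have : v i = 0 := by
        by_contra h
        exact hi (Finset.mem_filter.mpr ⟨Finset.mem_univ _, h⟩)
      rw [hprod, this]
      simp [L]
    rw [hfsum, h1, ← Finset.sum_coe_sort S]
    exact (Equiv.sum_comp S.equivFin.symm (fun i : S => ∏ j', L j' (c'' i j'))).symm
end

section
/- Set-multilinear ΣΠΣ(k) circuits are closed under factoring: let f ∈ F[X] be a nonzero polynomial computed by a set-multilinear ΣΠΣ(k) circuit with respect to the partition X = X_1 ⊔ ⋯ ⊔ X_d, and suppose f = g·h in F[X]. Then there is a partition of {1,…,d} into two disjoint sets A_1 and A_2 such that g is set-multilinear with respect to ⊔_{j∈A_1} X_j and h is set-multilinear with respect to ⊔_{j∈A_2} X_j (in particular, no block X_j contains a variable occurring in g and a variable occurring in h); moreover, g is computed by a set-multilinear ΣΠΣ(k) circuit with respect to the partition ⊔_{j∈A_1} X_j. -/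
open MvPolynomial

/-- Grading homomorphism for a weight. -/
noncomputable def gradHom {F σ : Type*} [Field F] (w : σ → ℕ) :
    MvPolynomial σ F →ₐ[F] Polynomial (MvPolynomial σ F) :=
  aeval (fun i => Polynomial.C (X i) * Polynomial.X ^ w i)

lemma gradHom_monomial {F σ : Type*} [Field F] (w : σ → ℕ) (m : σ →₀ ℕ) (a : F) :
    gradHom w (monomial m a) =
      Polynomial.C (monomial m a) * Polynomial.X ^ (Finsupp.weight w m) := by
  unfold gradHom
  rw [aeval_monomial, monomial_eq (s := m), Finsupp.weight_apply]
  simp only [Finsupp.prod, Finsupp.sum, mul_pow, Finset.prod_mul_distrib, map_mul, map_prod,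
    map_pow, mul_assoc, ← pow_mul, Finset.prod_pow_eq_pow_sum, smul_eq_mul]
  rw [show (∑ x ∈ m.support, m x * w x) = ∑ x ∈ m.support, w x * m x from
    Finset.sum_congr rfl fun x _ => mul_comm _ _]
  rfl

lemma coeff_gradHom {F σ : Type*} [Field F] (w : σ → ℕ) (p : MvPolynomial σ F) (m : σ →₀ ℕ)
    (N : ℕ) : coeff m ((gradHom w p).coeff N) = if Finsupp.weight w m = N then coeff m p else 0 := by
  classical
  induction p using MvPolynomial.induction_on' with
  | monomial m' a =>
    rw [gradHom_monomial, Polynomial.coeff_C_mul, Polynomial.coeff_X_pow, coeff_monomial]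
    by_cases h : m' = m
    · subst h
      by_cases h2 : Finsupp.weight w m' = N
      · simp [h2]
      · simp [h2, Ne.symm h2]
    · simp [h, mul_ite, apply_ite (coeff m), coeff_monomial]
  | add p q hp hq =>
    rw [map_add, Polynomial.coeff_add, coeff_add, hp, hq, coeff_add]
    split_ifs <;> simp

lemma gradHom_ne_zero {F σ : Type*} [Field F] (w : σ → ℕ) (p : MvPolynomial σ F) (hp : p ≠ 0) :
    gradHom w p ≠ 0 := by
  intro h
  apply hp
  ext m
  have := coeff_gradHom w p m (Finsupp.weight w m)
  rw [h] at this
  simpa using this.symm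

lemma weighted_factor {F σ : Type*} [Field F] (w : σ → ℕ) (f g h : MvPolynomial σ F) (N : ℕ)
    (hf0 : f ≠ 0) (hgh : f = g * h) (hf : IsWeightedHomogeneous w f N) :
    ∃ a b, a + b = N ∧ IsWeightedHomogeneous w g a ∧ IsWeightedHomogeneous w h b := by
  have hg0 : g ≠ 0 := by rintro rfl; simp [hgh] at hf0
  have hh0 : h ≠ 0 := by rintro rfl; simp [hgh] at hf0
  have hfm : gradHom w f = Polynomial.monomial N f := by
    ext n m
    rw [coeff_gradHom, Polynomial.coeff_monomial]
    by_cases hm : coeff m f = 0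
    · split_ifs <;> simp [hm]
    · rw [hf hm]; split_ifs <;> simp
  have h1 : gradHom w g * gradHom w h = Polynomial.monomial N f := by rw [← map_mul, ← hgh, hfm]
  have hG := gradHom_ne_zero w g hg0
  have hH := gradHom_ne_zero w h hh0
  have hd := Polynomial.natDegree_mul hG hH
  have ht := Polynomial.natTrailingDegree_mul hG hH
  rw [h1, Polynomial.natDegree_monomial_eq _ hf0] at hd
  rw [h1, Polynomial.natTrailingDegree_monomial hf0] at ht
  have hG' := (gradHom w g).natTrailingDegree_le_natDegree
  have hH' := (gradHom w h).natTrailingDegree_le_natDegree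
  have key : ∀ p : MvPolynomial σ F,
      (gradHom w p).natTrailingDegree = (gradHom w p).natDegree →
      IsWeightedHomogeneous w p (gradHom w p).natDegree := by
    intro p hp m hm
    have h3 : (gradHom w p).coeff (Finsupp.weight w m) ≠ 0 := by
      intro h4
      have := coeff_gradHom w p m (Finsupp.weight w m)
      rw [h4] at this
      simp at this
      exact hm this.symm
    have h5 := Polynomial.le_natDegree_of_ne_zero h3
    have h6 := Polynomial.natTrailingDegree_le_of_ne_zero h3
    omega
  exact ⟨_, _, hd.symm, key g (by omega), key h (by omega)⟩

lemma weight_block {d : ℕ} {n : Fin d → ℕ} (j : Fin d) (m : ((j : Fin d) × Fin (n j)) →₀ ℕ) :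
    Finsupp.weight (fun x : (j : Fin d) × Fin (n j) => if x.1 = j then 1 else 0) m
      = ∑ t : Fin (n j), m ⟨j, t⟩ := by
  rw [Finsupp.weight_apply, Finsupp.sum_fintype _ _ (by simp), Fintype.sum_sigma]
  rw [Finset.sum_eq_single j]
  · simp
  · intro b _ hb; simp [hb]
  · simp

lemma circuit_hom {F : Type*} [Field F] {d k : ℕ} {n : Fin d → ℕ}
    (c : Fin k → (j : Fin d) → Fin (n j) → F) (j : Fin d) :
    IsWeightedHomogeneous (fun x : (j : Fin d) × Fin (n j) => if x.1 = j then 1 else 0)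
      (∑ i, ∏ j : Fin d, ∑ t : Fin (n j), C (c i j t) * X ⟨j, t⟩ :
        MvPolynomial ((j : Fin d) × Fin (n j)) F) 1 := by
  apply IsWeightedHomogeneous.sum
  intro i _
  have key := IsWeightedHomogeneous.prod (R := F) Finset.univ
    (fun j' : Fin d => ∑ t : Fin (n j'), C (c i j' t) * X (⟨j', t⟩ : (j : Fin d) × Fin (n j)))
    (fun j' => if j' = j then 1 else 0)
    (w := fun x : (j : Fin d) × Fin (n j) => if x.1 = j then 1 else 0) ?_
  · rw [Finset.sum_ite_eq' Finset.univ j (fun _ => 1), if_pos (Finset.mem_univ j)] at key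
    exact key
  · intro j' _
    apply IsWeightedHomogeneous.sum
    intro t _
    apply IsWeightedHomogeneous.C_mul
    exact isWeightedHomogeneous_X F
      (fun x : (j : Fin d) × Fin (n j) => if x.1 = j then 1 else 0) ⟨j', t⟩

/-- Evaluating a set-multilinear polynomial at the indicator of one of its monomials. -/
lemma eval_monomial_point {F : Type*} [Field F] {d : ℕ} {n : Fin d → ℕ} (A : Finset (Fin d))
    (h : MvPolynomial ((j : Fin d) × Fin (n j)) F)
    (hh : ∀ m ∈ h.support, ∀ j : Fin d, (∑ t : Fin (n j), m ⟨j, t⟩) = if j ∈ A then 1 else 0)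
    (m₀ : ((j : Fin d) × Fin (n j)) →₀ ℕ) (hm₀ : m₀ ∈ h.support) :
    eval (fun x => (m₀ x : F)) h = coeff m₀ h := by
  have le1 : ∀ m ∈ h.support, ∀ x, m x ≤ 1 := by
    rintro m hm ⟨j, t⟩
    have h1 := hh m hm j
    have h2 := Finset.single_le_sum (f := fun t => m ⟨j, t⟩) (fun _ _ => Nat.zero_le _)
      (Finset.mem_univ t)
    have h3 : (if j ∈ A then 1 else 0) ≤ 1 := by split_ifs <;> simp
    omega
  rw [eval_eq', Finset.sum_eq_single m₀]
  · rw [Finset.prod_eq_one, mul_one]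
    intro x _
    have := le1 m₀ hm₀ x
    interval_cases m₀ x <;> simp
  · intro m hm hne
    by_cases hex : ∃ x, m x ≠ 0 ∧ m₀ x = 0
    · obtain ⟨x, hx, hx0⟩ := hex
      rw [Finset.prod_eq_zero (Finset.mem_univ x), mul_zero]
      simp [hx0, hx]
    · exfalso
      push Not at hex
      have hle : ∀ x, m x ≤ m₀ x := by
        intro x
        have h1 := le1 m hm x
        have h2 := hex x
        omega
      apply hne
      ext ⟨j, t⟩
      have hs : ∑ t : Fin (n j), m ⟨j, t⟩ = ∑ t : Fin (n j), m₀ ⟨j, t⟩ := by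
        rw [hh m hm, hh m₀ hm₀]
      exact (Finset.sum_eq_sum_iff_of_le (fun t _ => hle ⟨j, t⟩)).1 hs t (Finset.mem_univ t)
  · intro h1; exact absurd hm₀ h1

lemma vars_block {F : Type*} [Field F] {d : ℕ} {n : Fin d → ℕ} (A : Finset (Fin d))
    (h : MvPolynomial ((j : Fin d) × Fin (n j)) F)
    (hh : ∀ m ∈ h.support, ∀ j : Fin d, (∑ t : Fin (n j), m ⟨j, t⟩) = if j ∈ A then 1 else 0)
    (x : (j : Fin d) × Fin (n j)) (hx : x ∈ h.vars) : x.1 ∈ A := by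
  obtain ⟨m, hm, hxm⟩ := (mem_vars_iff_mem_support x).1 hx
  obtain ⟨j, t⟩ := x
  have h1 := hh m hm j
  have h2 := Finset.single_le_sum (f := fun t => m ⟨j, t⟩) (fun _ _ => Nat.zero_le _)
      (Finset.mem_univ t)
  by_contra hj
  simp only at h2 hj
  rw [if_neg hj] at h1
  have := Finsupp.mem_support_iff.1 hxm
  omega

/-- Set-multilinear ΣΠΣ(k) circuits are closed under factoring: if a nonzero
f computed by a set-multilinear ΣΠΣ(k) circuit (w.r.t. blocks X_1 ⊔ ⋯ ⊔ X_d) factors as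
f = g·h, then the blocks split into disjoint sets A₁ ∪ A₂ = [d] so that g is set-multilinear
w.r.t. the A₁-blocks and h w.r.t. the A₂-blocks (every monomial picks exactly one variable from
each block of the respective collection and no other variables), and g is computed by a
set-multilinear ΣΠΣ(k) circuit over the A₁-blocks (gates being scalar multiples of products of
nonzero linear forms, one per block of A₁). -/
theorem stmt_9 {F : Type*} [Field F] {d k : ℕ} (hd : 1 ≤ d)
    {n : Fin d → ℕ}
    (c : Fin k → (j : Fin d) → Fin (n j) → F) (hc : ∀ i j, c i j ≠ 0)
    (f g h : MvPolynomial ((j : Fin d) × Fin (n j)) F)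
    (hf0 : f ≠ 0)
    (hf : f = ∑ i, ∏ j : Fin d, ∑ t : Fin (n j), C (c i j t) * X ⟨j, t⟩)
    (hgh : f = g * h) :
    ∃ A₁ A₂ : Finset (Fin d), Disjoint A₁ A₂ ∧ A₁ ∪ A₂ = Finset.univ ∧
      (∀ m ∈ g.support, ∀ j : Fin d,
        (∑ t : Fin (n j), m ⟨j, t⟩) = if j ∈ A₁ then 1 else 0) ∧
      (∀ m ∈ h.support, ∀ j : Fin d,
        (∑ t : Fin (n j), m ⟨j, t⟩) = if j ∈ A₂ then 1 else 0) ∧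
      ∃ (b : Fin k → F) (c' : Fin k → (j : Fin d) → Fin (n j) → F),
        (∀ i, ∀ j ∈ A₁, c' i j ≠ 0) ∧
        g = ∑ i, C (b i) * ∏ j ∈ A₁, ∑ t : Fin (n j), C (c' i j t) * X ⟨j, t⟩ := by
  classical
  have hg0 : g ≠ 0 := by rintro rfl; simp [hgh] at hf0
  have hh0 : h ≠ 0 := by rintro rfl; simp [hgh] at hf0
  have hw := fun j => weighted_factor _ f g h 1 hf0 hgh (hf ▸ circuit_hom c j)
  choose a b hab hga hhb using hw
  have hG : ∀ m ∈ g.support, ∀ j : Fin d, (∑ t : Fin (n j), m ⟨j, t⟩) =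
      if j ∈ Finset.univ.filter (fun j => a j = 1) then 1 else 0 := by
    intro m hm j
    rw [← weight_block, hga j (mem_support_iff.1 hm)]
    have := hab j
    simp only [Finset.mem_filter, Finset.mem_univ, true_and]
    split_ifs <;> omega
  have hH : ∀ m ∈ h.support, ∀ j : Fin d, (∑ t : Fin (n j), m ⟨j, t⟩) =
      if j ∈ Finset.univ.filter (fun j => ¬ a j = 1) then 1 else 0 := by
    intro m hm j
    rw [← weight_block, hhb j (mem_support_iff.1 hm)]
    have := hab j
    simp only [Finset.mem_filter, Finset.mem_univ, true_and]
    split_ifs <;> omega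
  obtain ⟨m₀, hm₀⟩ := support_nonempty.2 hh0
  refine ⟨Finset.univ.filter (fun j => a j = 1), Finset.univ.filter (fun j => ¬ a j = 1),
    Finset.disjoint_filter_filter_not _ _ _, Finset.filter_union_filter_not_eq _ _, hG, hH, ?_⟩
  have he := eval_monomial_point _ h hH m₀ hm₀
  set e := coeff m₀ h with hedef
  have he0 : e ≠ 0 := mem_support_iff.1 hm₀
  let φ : MvPolynomial ((j : Fin d) × Fin (n j)) F →ₐ[F] MvPolynomial ((j : Fin d) × Fin (n j)) F :=
    aeval (fun x => if a x.1 = 1 then X x else C (m₀ x : F))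
  have hφg : φ g = g := by
    have : (φ : _ →+* _) g = (RingHom.id _) g := by
      apply hom_congr_vars
      · ext; simp [φ]
      · intro x hx _
        have := vars_block _ g hG x hx
        simp only [Finset.mem_filter, Finset.mem_univ, true_and] at this
        simp [φ, this]
      · rfl
    simpa using this
  have hφh : φ h = C e := by
    have : (φ : MvPolynomial ((j : Fin d) × Fin (n j)) F →+*
        MvPolynomial ((j : Fin d) × Fin (n j)) F) h = (C.comp (eval (fun x => (m₀ x : F)))) h := by
      apply hom_congr_vars
      · ext; simp [φ]
      · intro x hx _
        have := vars_block _ h hH x hx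
        simp only [Finset.mem_filter, Finset.mem_univ, true_and] at this
        simp [φ, this]
      · rfl
    rw [RingHom.comp_apply, he] at this
    simpa using this
  have hφf : g * C e = φ f := by rw [hgh, map_mul, hφg, hφh]
  have hg : g = C e⁻¹ * φ f := by
    rw [← hφf, mul_left_comm, ← C_mul, inv_mul_cancel₀ he0, C_1, mul_one]
  refine ⟨fun i => e⁻¹ * ∏ j ∈ Finset.univ.filter (fun j => ¬ a j = 1),
    ∑ t : Fin (n j), c i j t * (m₀ ⟨j, t⟩ : F), c, fun i j _ => hc i j, ?_⟩
  conv_lhs => rw [hg, hf]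
  rw [map_sum, Finset.mul_sum]
  refine Finset.sum_congr rfl fun i _ => ?_
  rw [map_prod, ← Finset.prod_filter_mul_prod_filter_not Finset.univ (fun j => a j = 1), C_mul,
    mul_assoc]
  congr 1
  rw [mul_comm, map_prod]
  congr 1
  · refine Finset.prod_congr rfl fun j hj => ?_
    have hj' := (Finset.mem_filter.1 hj).2
    simp only [map_sum, map_mul]
    refine Finset.sum_congr rfl fun t _ => ?_
    simp [φ, hj', algebraMap_eq]
  · refine Finset.prod_congr rfl fun j hj => ?_
    have hj' := (Finset.mem_filter.1 hj).2
    simp only [map_sum, map_mul]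
    refine Finset.sum_congr rfl fun t _ => ?_
    simp [φ, hj', algebraMap_eq]
end

section
/- Let F be a field of characteristic 0 or of characteristic greater than d, and let f ∈ F[x_1,…,x_n] have total degree at most d. Let ∂(f)^⊥ = {a ∈ F^n : a_1·∂f/∂x_1 + ⋯ + a_n·∂f/∂x_n = 0} and let t = dim_F ∂(f)^⊥. Then: (i) there exists an invertible matrix A ∈ F^{n×n} such that the polynomial f(A·x̄) depends only on the variables x_1, …, x_{n−t}; and (ii) for every invertible matrix B ∈ F^{n×n}, the polynomial f(B·x̄) depends on at least n − t variables. Hence the number of essential variables of f equals n − dim_F ∂(f)^⊥. -/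
open MvPolynomial

namespace EssVars

variable {F : Type*} [Field F] {n d : ℕ}

/-- Substitution of linear forms. -/
noncomputable abbrev sub (A : Matrix (Fin n) (Fin n) F) :
    MvPolynomial (Fin n) F →ₐ[F] MvPolynomial (Fin n) F :=
  aeval (fun i : Fin n => ∑ j : Fin n, C (A i j) * X j)

theorem sub_comp (A B : Matrix (Fin n) (Fin n) F) (f : MvPolynomial (Fin n) F) :
    sub B (sub A f) = sub (A * B) f := by
  have : (sub B).comp (sub A) = sub (A * B) := by
    apply MvPolynomial.algHom_ext
    intro i
    simp only [AlgHom.comp_apply, sub, aeval_X, map_sum, map_mul, Matrix.mul_apply,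
      Finset.mul_sum, Finset.sum_mul, algHom_C, algebraMap_eq]
    rw [Finset.sum_comm]
    simp only [mul_assoc]
  rw [← this]; rfl

theorem sub_one (f : MvPolynomial (Fin n) F) : sub (1 : Matrix (Fin n) (Fin n) F) f = f := by
  have : sub (1 : Matrix (Fin n) (Fin n) F) = AlgHom.id F _ := by
    apply MvPolynomial.algHom_ext
    intro i
    simp [sub, Matrix.one_apply, apply_ite (C (σ := Fin n) (R := F))]
  rw [this]; rfl

theorem sub_injective (A : Matrix (Fin n) (Fin n) F) (hA : IsUnit A.det) :
    Function.Injective (sub A) := by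
  intro f g h
  have h2 := congrArg (sub A⁻¹) h
  rwa [sub_comp, sub_comp, Matrix.mul_nonsing_inv _ hA, sub_one, sub_one] at h2

theorem pderiv_sub (A : Matrix (Fin n) (Fin n) F) (f : MvPolynomial (Fin n) F) (j : Fin n) :
    pderiv j (sub A f) = sub A (∑ i, A i j • pderiv i f) := by
  classical
  induction f using MvPolynomial.induction_on with
  | C a => simp [sub]
  | add p q hp hq => simp only [map_add, hp, hq, smul_add, Finset.sum_add_distrib]
  | mul_X p k hp =>
    have h1 : pderiv j (sub A (X k)) = C (A k j) := by
      simp [sub, pderiv_X, Pi.single_apply]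
    rw [map_mul, pderiv_mul, hp, h1]
    simp only [pderiv_mul, pderiv_X, smul_add, Finset.sum_add_distrib, map_add]
    congr 1
    · rw [← map_mul, Finset.sum_mul]
      simp only [smul_mul_assoc]
    · simp [Pi.single_apply, smul_eq_C_mul, mul_comm]

theorem totalDegree_sub_le (A : Matrix (Fin n) (Fin n) F) (f : MvPolynomial (Fin n) F) :
    (sub A f).totalDegree ≤ f.totalDegree := by
  have hl : ∀ i, (∑ j : Fin n, C (A i j) * X j : MvPolynomial (Fin n) F).totalDegree ≤ 1 := by
    intro i
    apply totalDegree_finsetSum_le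
    intro j _
    refine (totalDegree_mul _ _).trans ?_
    simp
  rw [sub, aeval_def, eval₂_eq]
  apply totalDegree_finsetSum_le
  intro m hm
  refine (totalDegree_mul _ _).trans ?_
  rw [algebraMap_eq, totalDegree_C, zero_add]
  refine (totalDegree_finsetProd _ _).trans ?_
  refine le_trans ?_ (le_totalDegree hm)
  rw [Finsupp.sum]
  apply Finset.sum_le_sum
  intro i _
  refine (totalDegree_pow _ _).trans ?_
  simpa using Nat.mul_le_mul_left (m i) (hl i)

theorem notMem_vars (hchar : ringChar F = 0 ∨ d < ringChar F)
    (g : MvPolynomial (Fin n) F) (hdeg : g.totalDegree ≤ d) (j : Fin n)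
    (h : pderiv j g = 0) : j ∉ g.vars := by
  classical
  intro hj
  obtain ⟨m, hm, hjm⟩ := (mem_vars j).1 hj
  have hmj : m j ≠ 0 := Finsupp.mem_support_iff.1 hjm
  have hle : m j ≤ d := by
    refine le_trans ?_ ((degreeOf_le_totalDegree g j).trans hdeg)
    exact monomial_le_degreeOf j hm
  have hc := congrArg (coeff (m - Finsupp.single j 1)) h
  rw [coeff_pderiv] at hc
  have e : m - Finsupp.single j 1 + Finsupp.single j 1 = m := by
    apply tsub_add_cancel_of_le
    simpa using Nat.one_le_iff_ne_zero.2 hmj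
  rw [e, coeff_zero] at hc
  have hm0 : coeff m g ≠ 0 := mem_support_iff.1 hm
  have h2 : ((m j : ℕ) : F) = 0 := by
    have e2 : (m - Finsupp.single j 1 : Fin n →₀ ℕ) j + 1 = m j := by
      simp; omega
    rw [← e2]
    push_cast
    rcases mul_eq_zero.1 hc with h | h
    · exact absurd h hm0
    · exact_mod_cast h
  have hdvd := (ringChar.spec F (m j)).1 h2
  rcases hchar with h0 | h0
  · rw [h0] at hdvd; exact hmj (zero_dvd_iff.1 hdvd)
  · have := Nat.le_of_dvd (Nat.pos_of_ne_zero hmj) hdvd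
    omega

/-- The space of vanishing directional derivatives. -/
noncomputable def perp (f : MvPolynomial (Fin n) F) : Submodule F (Fin n → F) :=
  LinearMap.ker (Fintype.linearCombination F (fun i => pderiv i f))

theorem mem_perp (f : MvPolynomial (Fin n) F) (a : Fin n → F) :
    a ∈ perp f ↔ ∑ i, a i • pderiv i f = 0 := by
  simp [perp, Fintype.linearCombination_apply]

theorem finrank_eq (f : MvPolynomial (Fin n) F) :
    Set.finrank F {a : Fin n → F | (∑ i, a i • pderiv i f) = 0} = Module.finrank F (perp f) := by
  have : {a : Fin n → F | (∑ i, a i • pderiv i f) = 0} = (perp f : Set (Fin n → F)) := by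
    ext a; simp [mem_perp]
  rw [this, Set.finrank, Submodule.span_eq]

theorem exists_matrix (K : Submodule F (Fin n → F)) :
    ∃ A : Matrix (Fin n) (Fin n) F, IsUnit A.det ∧
      ∀ j : Fin n, n - Module.finrank F K ≤ (j : ℕ) → (fun i => A i j) ∈ K := by
  obtain ⟨L, hL⟩ := K.exists_isCompl
  have hsum := Submodule.finrank_add_eq_of_isCompl hL
  rw [Module.finrank_fin_fun] at hsum
  let b0 := ((Module.finBasis F L).prod (Module.finBasis F K)).map
    (Submodule.prodEquivOfIsCompl L K hL.symm)
  have hn : Module.finrank F L + Module.finrank F K = n := by omega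
  let e : Fin (Module.finrank F L) ⊕ Fin (Module.finrank F K) ≃ Fin n :=
    finSumFinEquiv.trans (finCongr hn)
  let b := b0.reindex e
  refine ⟨(Pi.basisFun F (Fin n)).toMatrix b, ?_, ?_⟩
  · have := (Pi.basisFun F (Fin n)).invertibleToMatrix b
    exact Matrix.isUnit_det_of_invertible _
  · intro j hj
    have h1 : (fun i => (Pi.basisFun F (Fin n)).toMatrix b i j) = b j := by
      ext i; simp [Module.Basis.toMatrix_apply]
    rw [h1]
    obtain ⟨x, rfl⟩ := e.surjective j
    rcases x with x | x
    · exfalso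
      have : ((e (Sum.inl x) : Fin n) : ℕ) = x := by simp [e]
      have := x.2
      omega
    · simp [b, b0]

theorem part_i (hchar : ringChar F = 0 ∨ d < ringChar F)
    (f : MvPolynomial (Fin n) F) (hdeg : f.totalDegree ≤ d) :
    ∃ A : Matrix (Fin n) (Fin n) F, IsUnit A.det ∧
      ∀ i : Fin n, n - Module.finrank F (perp f) ≤ (i : ℕ) → i ∉ (sub A f).vars := by
  obtain ⟨A, hA, h⟩ := exists_matrix (perp f)
  refine ⟨A, hA, fun j hj => ?_⟩
  apply notMem_vars hchar _ ((totalDegree_sub_le A f).trans hdeg)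
  rw [pderiv_sub, (mem_perp f _).1 (h j hj), map_zero]

theorem part_ii (f : MvPolynomial (Fin n) F) (B : Matrix (Fin n) (Fin n) F) (hB : IsUnit B.det) :
    n - Module.finrank F (perp f) ≤ (sub B f).vars.card := by
  classical
  have hmem : ∀ j : {j // j ∉ (sub B f).vars}, (fun i => B i j) ∈ perp f := by
    intro j
    rw [mem_perp]
    apply sub_injective B hB
    rw [map_zero, ← pderiv_sub]
    exact pderiv_eq_zero_of_notMem_vars j.2
  have hli : LinearIndependent F B.col :=
    Matrix.linearIndependent_cols_of_isUnit ((Matrix.isUnit_iff_isUnit_det B).2 hB)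
  have hli2 : LinearIndependent F
      (fun j : {j // j ∉ (sub B f).vars} => (⟨fun i => B i j, hmem j⟩ : perp f)) := by
    apply LinearIndependent.of_comp (perp f).subtype
    exact hli.comp _ Subtype.val_injective
  have := hli2.fintype_card_le_finrank
  rw [Fintype.card_subtype_compl, Fintype.card_fin, Fintype.card_coe] at this
  omega

end EssVars


open MvPolynomial

/-- (Carlini/Kayal) Over a field of characteristic 0 or > d, for f of total
degree ≤ d, with t = dim {a ∈ F^n : Σ_i a_i ∂f/∂x_i = 0}:
(i) some invertible A makes f(A·x̄) depend only on the first n − t variables;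
(ii) for every invertible B, f(B·x̄) depends on at least n − t variables;
hence the number of essential variables of f (the least m such that some invertible change of
variables makes f depend on only m variables) equals n − t. -/
theorem stmt_13 {F : Type*} [Field F] {n d : ℕ}
    (hchar : ringChar F = 0 ∨ d < ringChar F)
    (f : MvPolynomial (Fin n) F) (hdeg : f.totalDegree ≤ d) :
    (∃ A : Matrix (Fin n) (Fin n) F, IsUnit A.det ∧
      ∀ i : Fin n,
        n - Set.finrank F {a : Fin n → F | (∑ i, a i • pderiv i f) = 0} ≤ (i : ℕ) →
        i ∉ (aeval (fun i : Fin n => ∑ j : Fin n, C (A i j) * X j) f).vars) ∧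
    (∀ B : Matrix (Fin n) (Fin n) F, IsUnit B.det →
      n - Set.finrank F {a : Fin n → F | (∑ i, a i • pderiv i f) = 0} ≤
        ((aeval (fun i : Fin n => ∑ j : Fin n, C (B i j) * X j) f).vars).card) ∧
    sInf {m : ℕ | ∃ A : Matrix (Fin n) (Fin n) F, IsUnit A.det ∧
        ((aeval (fun i : Fin n => ∑ j : Fin n, C (A i j) * X j) f).vars).card ≤ m} =
      n - Set.finrank F {a : Fin n → F | (∑ i, a i • pderiv i f) = 0} := by
  rw [EssVars.finrank_eq]
  have h1 := EssVars.part_i hchar f hdeg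
  have h2 := EssVars.part_ii f
  refine ⟨h1, h2, ?_⟩
  obtain ⟨A, hA, h⟩ := h1
  have hm : n - Module.finrank F (EssVars.perp f) ∈ {m : ℕ | ∃ A : Matrix (Fin n) (Fin n) F,
      IsUnit A.det ∧
      ((aeval (fun i : Fin n => ∑ j : Fin n, C (A i j) * X j) f).vars).card ≤ m} := by
    refine ⟨A, hA, ?_⟩
    rw [← Finset.card_range (n - Module.finrank F (EssVars.perp f))]
    apply Finset.card_le_card_of_injOn (fun i : Fin n => (i : ℕ))
    · intro i hi
      by_contra hc
      exact h i (by simpa using hc) hi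
    · exact Fin.val_injective.injOn
  apply le_antisymm (Nat.sInf_le hm)
  obtain ⟨B, hB, hle⟩ := Nat.sInf_mem ⟨_, hm⟩
  exact (h2 B hB).trans hle
end

section
/- If f ∈ F[x_1,…,x_n] can be written as f = Σ_{i=1}^k ∏_{j=1}^{d_i} ℓ_{i,j}, where each ℓ_{i,j} is a linear polynomial (total degree at most 1, constant term allowed) and d_i ≤ d for all i, then f has at most kd essential variables: there exists an invertible matrix A ∈ F^{n×n} such that f(A·x̄) depends only on the variables x_1, …, x_m, where m = min(n, kd). -/
open MvPolynomial

lemma linear_form_aux {F : Type*} [Field F] {n : ℕ} (p : MvPolynomial (Fin n) F)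
    (hp : p.totalDegree ≤ 1) :
    p = C (coeff 0 p) + ∑ i, C (coeff (Finsupp.single i 1) p) * X i := by
  classical
  ext s
  have hC : ∀ i : Fin n, coeff s (C (coeff (Finsupp.single i 1) p) * X i : MvPolynomial (Fin n) F)
      = if Finsupp.single i 1 = s then coeff s p else 0 := by
    intro i
    rw [coeff_C_mul, coeff_X']
    split_ifs with h
    · rw [h, mul_one]
    · rw [mul_zero]
  rw [coeff_add, coeff_sum, coeff_C, Finset.sum_congr rfl (fun i _ => hC i)]
  by_cases h0 : s = 0
  · subst h0
    simp
  rw [if_neg (Ne.symm h0), zero_add]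
  by_cases h1 : ∃ i, Finsupp.single i 1 = s
  · obtain ⟨i, hi⟩ := h1
    rw [Finset.sum_eq_single i]
    · rw [if_pos hi]
    · intro j _ hj
      rw [if_neg]
      intro h
      exact hj (Finsupp.single_left_injective one_ne_zero (h.trans hi.symm))
    · simp
  · push Not at h1
    rw [Finset.sum_eq_zero (fun i _ => if_neg (h1 i))]
    by_contra hne
    have hs : s ∈ p.support := mem_support_iff.2 hne
    have hdeg := (le_totalDegree hs).trans hp
    obtain ⟨i, hi⟩ : ∃ i, s i ≠ 0 := by
      by_contra hcon
      push Not at hcon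
      exact h0 (Finsupp.ext hcon)
    rw [Finsupp.sum_fintype _ _ (fun _ => rfl)] at hdeg
    have key := Finset.add_sum_erase Finset.univ (fun a => s a) (Finset.mem_univ i)
    have hz : ∑ a ∈ Finset.univ.erase i, s a = 0 := by
      omega
    apply h1 i
    ext j
    by_cases hj : j = i
    · subst hj
      simp only [Finsupp.single_eq_same]
      omega
    · rw [Finsupp.single_eq_of_ne hj]
      exact (Finset.sum_eq_zero_iff.1 hz j (by simp [hj])).symm

lemma basis_aux {F : Type*} [Field F] {n m : ℕ} (K : Submodule F (Fin n → F))
    (hK : n ≤ m + Module.finrank F K) :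
    ∃ b : Module.Basis (Fin n) F (Fin n → F), ∀ t : Fin n, m ≤ (t : ℕ) → b t ∈ K := by
  obtain ⟨W, hW⟩ := Submodule.exists_isCompl K
  have hsum : Module.finrank F W + Module.finrank F K = n := by
    have := Submodule.finrank_add_eq_of_isCompl hW
    rw [Module.finrank_fin_fun] at this
    omega
  let b0 := ((Module.finBasis F W).prod (Module.finBasis F K)).map
    (Submodule.prodEquivOfIsCompl W K hW.symm)
  let e := finSumFinEquiv.trans (finCongr hsum)
  refine ⟨b0.reindex e, fun t ht => ?_⟩
  rw [Module.Basis.reindex_apply]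
  obtain ⟨x, rfl⟩ := e.surjective t
  rw [Equiv.symm_apply_apply]
  rcases x with x | x
  · exfalso
    have := x.2
    simp [e] at ht
    omega
  · simp [b0]

/-- If f = Σ_{i=1}^k ∏_{j=1}^{d_i} ℓ_{i,j} with each ℓ_{i,j} a linear
polynomial (total degree ≤ 1) and d_i ≤ d, then f has at most kd essential variables: some
invertible A ∈ F^{n×n} makes f(A·x̄) depend only on x_1, …, x_m with m = min(n, kd). -/
theorem stmt_15 {F : Type*} [Field F] {n k d : ℕ}
    (d' : Fin k → ℕ) (hd' : ∀ i, d' i ≤ d)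
    (ℓ : (i : Fin k) → Fin (d' i) → MvPolynomial (Fin n) F)
    (hlin : ∀ i j, (ℓ i j).totalDegree ≤ 1)
    (f : MvPolynomial (Fin n) F)
    (hf : f = ∑ i, ∏ j, ℓ i j) :
    ∃ A : Matrix (Fin n) (Fin n) F, IsUnit A.det ∧
      ∀ t : Fin n, min n (k * d) ≤ (t : ℕ) →
        t ∉ (aeval (fun i : Fin n => ∑ j : Fin n, C (A i j) * X j) f).vars := by
  classical
  let M : Matrix (Σ i, Fin (d' i)) (Fin n) F := fun p t => coeff (Finsupp.single t 1) (ℓ p.1 p.2)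
  have hrank : n ≤ min n (k * d) + Module.finrank F (LinearMap.ker M.mulVecLin) := by
    have h1 := LinearMap.finrank_range_add_finrank_ker M.mulVecLin
    have h2 := Submodule.finrank_le (LinearMap.range M.mulVecLin)
    rw [Module.finrank_fin_fun] at h1
    rw [Module.finrank_fintype_fun_eq_card, Fintype.card_sigma] at h2
    have h3 : ∑ i, Fintype.card (Fin (d' i)) ≤ k * d := by
      calc _ ≤ ∑ _i : Fin k, d := Finset.sum_le_sum (fun i _ => by simpa using hd' i)
        _ = k * d := by simp
    omega
  obtain ⟨b, hb⟩ := basis_aux _ hrank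
  refine ⟨(Pi.basisFun F (Fin n)).toMatrix b, ?_, ?_⟩
  · rw [← Matrix.isUnit_iff_isUnit_det]
    have := (Pi.basisFun F (Fin n)).invertibleToMatrix b
    exact isUnit_of_invertible _
  intro t ht
  suffices h : aeval (fun i : Fin n => ∑ j : Fin n,
      C ((Pi.basisFun F (Fin n)).toMatrix b i j) * X j) f ∈
      supported F {t : Fin n | (t : ℕ) < min n (k * d)} by
    intro hmem
    have := mem_supported.1 h hmem
    simp only [Set.mem_ofPred_eq] at this
    omega
  rw [hf, map_sum]
  refine sum_mem fun i _ => ?_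
  rw [map_prod]
  refine prod_mem fun j _ => ?_
  rw [linear_form_aux _ (hlin i j)]
  simp only [map_add, map_sum, map_mul, aeval_X, aeval_C, Finset.mul_sum]
  refine add_mem (Subalgebra.algebraMap_mem _ _) ?_
  rw [Finset.sum_comm]
  refine sum_mem fun s _ => ?_
  simp only [algebraMap_eq, ← mul_assoc, ← C_mul]
  rw [← Finset.sum_mul, ← map_sum]
  by_cases hs : (s : ℕ) < min n (k * d)
  · exact mul_mem (Subalgebra.algebraMap_mem _ _) (X_mem_supported.2 hs)
  · have h0 := congrFun (LinearMap.mem_ker.1 (hb s (not_lt.1 hs))) ⟨i, j⟩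
    have h1 : ∑ x, coeff (Finsupp.single x 1) (ℓ i j) *
        (Pi.basisFun F (Fin n)).toMatrix b x s = 0 := by
      rw [Matrix.mulVecLin_apply] at h0
      simpa [M, Matrix.mulVec, dotProduct, Module.Basis.toMatrix_apply] using h0
    rw [h1, map_zero, zero_mul]
    exact zero_mem _
end

section
/- Let F be an algebraically closed field, let m ≥ 2, and let f_1, …, f_m ∈ F[x_1,…,x_n] be polynomials such that each f_i, viewed as a polynomial in x_1 over F[x_2,…,x_n], is monic in x_1 of positive x_1-degree, and gcd(f_1,…,f_m) = 1. Let u_2, …, u_m be fresh variables and let h = Res_{x_1}(f_1, u_2 f_2 + u_3 f_3 + ⋯ + u_m f_m) ∈ F[x_2,…,x_n, u_2,…,u_m]; write h = Σ_α h_α(x_2,…,x_n) u^α with h_α ∈ F[x_2,…,x_n]. Then the system f_1 = f_2 = ⋯ = f_m = 0 has a common solution in F^n if and only if the system h_α = 0 (over all multi-indices α) has a common solution in F^{n−1}. -/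
/-- The Sylvester matrix of p and q with respect to their degrees: its columns (indexed by
`Fin q.natDegree ⊕ Fin p.natDegree`) are the coefficient vectors of X^a·p (a < deg q) and of
X^b·q (b < deg p), listed in the rows indexed via `finSumFinEquiv`. -/
noncomputable def sylvester {R : Type*} [CommRing R] (p q : Polynomial R) :
    Matrix (Fin q.natDegree ⊕ Fin p.natDegree) (Fin q.natDegree ⊕ Fin p.natDegree) R :=
  Matrix.of fun i j =>
    Sum.elim
      (fun a : Fin q.natDegree => (Polynomial.X ^ (a : ℕ) * p).coeff (finSumFinEquiv j : ℕ))
      (fun b : Fin p.natDegree => (Polynomial.X ^ (b : ℕ) * q).coeff (finSumFinEquiv j : ℕ)) i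

/-- The resultant of two polynomials, as the determinant of their Sylvester matrix. -/
noncomputable def resultant {R : Type*} [CommRing R] (p q : Polynomial R) : R :=
  (sylvester p q).det

theorem aux_resultant_eq {R : Type*} [CommRing R] (p q : Polynomial R) :
    resultant p q = Polynomial.resultant q p q.natDegree p.natDegree := by
  unfold resultant Polynomial.resultant
  rw [← Matrix.det_submatrix_equiv_self finSumFinEquiv, ← Matrix.det_transpose]
  congr 1
  ext j i
  rcases i with a | b
  · simp only [sylvester, Polynomial.sylvester, Matrix.transpose_apply, Matrix.of_apply,
      Matrix.submatrix_apply, Sum.elim_inl, finSumFinEquiv_apply_left, Fin.addCases_left,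
      Polynomial.coeff_X_pow_mul', Set.mem_Icc]
    rw [ite_and]
    split_ifs with h₁ h₂ <;> try rfl
    exact Polynomial.coeff_eq_zero_of_natDegree_lt (by omega)
  · simp only [sylvester, Polynomial.sylvester, Matrix.transpose_apply, Matrix.of_apply,
      Matrix.submatrix_apply, Sum.elim_inr, finSumFinEquiv_apply_right, Fin.addCases_right,
      Polynomial.coeff_X_pow_mul', Set.mem_Icc]
    rw [ite_and]
    split_ifs with h₁ h₂ <;> try rfl
    exact Polynomial.coeff_eq_zero_of_natDegree_lt (by omega)

theorem aux_sum_eq_zero {F : Type*} [Field F] {m' : ℕ} (c : Fin m' → F) :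
    (∑ i, MvPolynomial.X i * MvPolynomial.C (c i) : MvPolynomial (Fin m') F) = 0 ↔
      ∀ i, c i = 0 := by
  constructor
  · intro h i
    have := congrArg (MvPolynomial.eval (Pi.single i 1)) h
    simpa [Pi.single_apply] using this
  · intro h
    simp [h]

theorem aux_key {F : Type*} [Field F] [IsAlgClosed F] {n' m' : ℕ}
    (f₁ : Polynomial (MvPolynomial (Fin n') F))
    (g : Fin m' → Polynomial (MvPolynomial (Fin n') F))
    (hf₁ : f₁.Monic) (y : Fin n' → F) :
    MvPolynomial.map (MvPolynomial.eval y) (resultant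
              (f₁.map (MvPolynomial.C :
                MvPolynomial (Fin n') F →+* MvPolynomial (Fin m') (MvPolynomial (Fin n') F)))
              (∑ i, Polynomial.C (MvPolynomial.X i) *
                (g i).map (MvPolynomial.C :
                  MvPolynomial (Fin n') F →+*
                    MvPolynomial (Fin m') (MvPolynomial (Fin n') F)))) = 0 ↔
    ∃ x₁ : F, Polynomial.eval₂ (MvPolynomial.eval y) x₁ f₁ = 0 ∧
        ∀ i, Polynomial.eval₂ (MvPolynomial.eval y) x₁ (g i) = 0 := by
  set q := (∑ i, Polynomial.C (MvPolynomial.X i) *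
                (g i).map (MvPolynomial.C :
                  MvPolynomial (Fin n') F →+*
                    MvPolynomial (Fin m') (MvPolynomial (Fin n') F))) with hq
  have hcomp : (MvPolynomial.map (MvPolynomial.eval y)).comp (MvPolynomial.C :
      MvPolynomial (Fin n') F →+* MvPolynomial (Fin m') (MvPolynomial (Fin n') F)) =
      (MvPolynomial.C : F →+* MvPolynomial (Fin m') F).comp (MvPolynomial.eval y) := by
    ext <;> simp
  set fb : Polynomial F := f₁.map (MvPolynomial.eval y) with hfb
  have hfbm : fb.Monic := hf₁.map _
  have hs : fb.Splits := IsAlgClosed.splits fb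
  have hfm : (f₁.map (MvPolynomial.C :
      MvPolynomial (Fin n') F →+* MvPolynomial (Fin m') (MvPolynomial (Fin n') F))).map
      (MvPolynomial.map (MvPolynomial.eval y)) = fb.map MvPolynomial.C := by
    rw [Polynomial.map_map, hcomp, ← Polynomial.map_map]
  have hd : (f₁.map (MvPolynomial.C :
      MvPolynomial (Fin n') F →+* MvPolynomial (Fin m') (MvPolynomial (Fin n') F))).natDegree
      = (fb.map (MvPolynomial.C : F →+* MvPolynomial (Fin m') F)).natDegree := by
    rw [hf₁.natDegree_map, hfbm.natDegree_map, hf₁.natDegree_map]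
  have hqe : ∀ a : F, (q.map (MvPolynomial.map (MvPolynomial.eval y))).eval (MvPolynomial.C a) =
      ∑ i, MvPolynomial.X i *
        MvPolynomial.C (Polynomial.eval₂ (MvPolynomial.eval y) a (g i)) := by
    intro a
    simp only [hq, Polynomial.map_sum, Polynomial.eval_finsetSum, Polynomial.map_mul,
      Polynomial.map_C, Polynomial.eval_mul, Polynomial.eval_C, MvPolynomial.map_X,
      Polynomial.map_map, hcomp]
    refine Finset.sum_congr rfl fun i _ => ?_
    rw [Polynomial.eval_map, ← Polynomial.hom_eval₂]
  rw [aux_resultant_eq, Polynomial.resultant_comm, map_mul, map_pow, map_neg, map_one,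
    ← Polynomial.resultant_map_map, hfm, hd,
    Polynomial.resultant_eq_prod_eval _ _ _ Polynomial.natDegree_map_le (hs.map _),
    (hfbm.map _).leadingCoeff, one_pow, one_mul, hs.roots_map_of_injective (MvPolynomial.C_injective _ _)]
  rw [mul_eq_zero, or_iff_right (pow_ne_zero _ (neg_ne_zero.mpr one_ne_zero)),
    Multiset.prod_eq_zero_iff]
  simp only [Multiset.map_map, Multiset.mem_map, Function.comp_apply, hqe, aux_sum_eq_zero,
    Polynomial.mem_roots hfbm.ne_zero, Polynomial.IsRoot.def, exists_exists_and_eq_and]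
  simp only [hfb, Polynomial.eval_map]

/-- Let F be algebraically closed and let f₁ and g 1, …, g m' (m' ≥ 1, so
m = m' + 1 ≥ 2 polynomials in all) be polynomials in x₁ over F[x₂,…,x_n] (here with n' = n − 1
further variables), each monic in x₁ of positive x₁-degree, with gcd(f₁, g 1, …, g m') = 1
(every common divisor is a unit).  Let h = Res_{x₁}(f₁, Σ_i u_i·g i) over the u-variables, with
u-coefficients h_α ∈ F[x₂,…,x_n].  Then the system f₁ = g 1 = ⋯ = g m' = 0 has a common
solution in F^n iff the system h_α = 0 (all α) has a common solution in F^{n−1}. -/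
theorem stmt_16 {F : Type*} [Field F] [IsAlgClosed F] {n' m' : ℕ} (hm' : 1 ≤ m')
    (f₁ : Polynomial (MvPolynomial (Fin n') F))
    (g : Fin m' → Polynomial (MvPolynomial (Fin n') F))
    (hf₁ : f₁.Monic) (hf₁d : 0 < f₁.natDegree)
    (hg : ∀ i, (g i).Monic) (hgd : ∀ i, 0 < (g i).natDegree)
    (hgcd : ∀ p : Polynomial (MvPolynomial (Fin n') F),
      p ∣ f₁ → (∀ i, p ∣ g i) → IsUnit p) :
    (∃ (x₁ : F) (y : Fin n' → F),
        Polynomial.eval₂ (MvPolynomial.eval y) x₁ f₁ = 0 ∧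
        ∀ i, Polynomial.eval₂ (MvPolynomial.eval y) x₁ (g i) = 0) ↔
    (∃ y : Fin n' → F, ∀ α : Fin m' →₀ ℕ,
        MvPolynomial.eval y
          (MvPolynomial.coeff α
            (resultant
              (f₁.map (MvPolynomial.C :
                MvPolynomial (Fin n') F →+* MvPolynomial (Fin m') (MvPolynomial (Fin n') F)))
              (∑ i, Polynomial.C (MvPolynomial.X i) *
                (g i).map (MvPolynomial.C :
                  MvPolynomial (Fin n') F →+*
                    MvPolynomial (Fin m') (MvPolynomial (Fin n') F))))) = 0) := by
  have hy : ∀ (y : Fin n' → F) (P : MvPolynomial (Fin m') (MvPolynomial (Fin n') F)),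
      (∀ α, MvPolynomial.eval y (MvPolynomial.coeff α P) = 0) ↔
        MvPolynomial.map (MvPolynomial.eval y) P = 0 := by
    intro y P
    simp [MvPolynomial.ext_iff, MvPolynomial.coeff_map]
  simp only [hy, aux_key f₁ g hf₁]
  exact exists_comm
end

section
/- Let C = T_1 + ⋯ + T_k be a set-multilinear ΣΠΣ(k) circuit of degree d with respect to the partition X = X_1 ⊔ ⋯ ⊔ X_d, such that Σ_{i∈U} T_i ≠ 0 for every nonempty subset U ⊆ {1,…,k}. Fix a subset J ⊆ {1,…,d} of blocks to keep alive, let S ⊆ F be a finite nonempty set, and let σ assign to each variable in ⊔_{j∉J} X_j an independent uniformly random value from S. Then with probability at least 1 − 2^k·d/|S|, for every nonempty subset U ⊆ {1,…,k} the restricted polynomial (Σ_{i∈U} T_i)|_σ is nonzero; in particular, with this probability, C|_σ = Σ_{i=1}^k T_i|_σ is a nonzero and minimal set-multilinear ΣΠΣ(k) circuit with respect to the partition ⊔_{j∈J} X_j (each restricted gate being a nonzero scalar times a product of linear forms in the blocks X_j, j ∈ J). -/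
open MvPolynomial
open scoped Classical

lemma sz_aux {F R : Type*} [CommRing R] [IsDomain R] {ι : Type*} [Fintype ι]
    (p : MvPolynomial ι R) (hp : p ≠ 0) (D : ℕ) (hD : p.totalDegree ≤ D) (S : Finset F)
    (hS : S.Nonempty) (φ : F → R) (hφ : Function.Injective φ) :
    (((Fintype.piFinset fun _ : ι => S).filter
      (fun σ : ι → F => eval (fun x => φ (σ x)) p = 0)).card : ℝ)
      ≤ (D : ℝ) / S.card * ((Fintype.piFinset fun _ : ι => S).card : ℝ) := by
  set e := Fintype.equivFin ι
  have h1 : renameEquiv R e p ≠ 0 := by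
    rw [Ne, EmbeddingLike.map_eq_zero_iff]; exact hp
  have h2 := schwartz_zippel_totalDegree h1 (S.image φ)
  rw [totalDegree_renameEquiv, Finset.card_image_of_injective _ hφ] at h2
  have hpos : (0 : ℚ≥0) < S.card := by exact_mod_cast hS.card_pos
  rw [div_le_div_iff₀ (by positivity) hpos] at h2
  have h3 : ((Fintype.piFinset fun _ : ι => S).filter
      (fun σ : ι → F => eval (fun x => φ (σ x)) p = 0)).card ≤
      ((Fintype.piFinset fun _ : Fin (Fintype.card ι) => S.image φ).filter
      (fun f => eval f (renameEquiv R e p) = 0)).card := by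
    refine Finset.card_le_card_of_injOn (fun σ i => φ (σ (e.symm i))) ?_ ?_
    · intro σ hσ
      simp only [Finset.coe_filter, Set.mem_ofPred_eq, Fintype.mem_piFinset] at hσ ⊢
      refine ⟨fun i => Finset.mem_image_of_mem _ (hσ.1 _), ?_⟩
      rw [renameEquiv_apply, eval_rename]
      simpa [Function.comp_def] using hσ.2
    · intro σ _ τ _ h
      funext x
      have := congrFun h (e x)
      simpa using hφ this
  have h4 : ((Fintype.piFinset fun _ : ι => S).filter
      (fun σ : ι → F => eval (fun x => φ (σ x)) p = 0)).card * S.card ≤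
      D * S.card ^ Fintype.card ι := by
    refine (Nat.mul_le_mul_right _ h3).trans (le_trans ?_ (Nat.mul_le_mul_right _ hD))
    exact_mod_cast h2
  have hpos' : (0 : ℝ) < S.card := by exact_mod_cast hS.card_pos
  rw [div_mul_eq_mul_div, le_div_iff₀ hpos', Fintype.card_piFinset, Finset.prod_const, Finset.card_univ]
  exact_mod_cast h4

/-- Let C = T_1 + ⋯ + T_k be a set-multilinear ΣΠΣ(k) circuit of degree d
(gates T_i = ∏_j ℓ_{i,j} with ℓ_{i,j} a nonzero linear form in block X_j, given by coefficients
`c i j`) such that Σ_{i∈U} T_i ≠ 0 for every nonempty U ⊆ [k].  Fix a set J of blocks to keep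
alive and assign to each variable of the other blocks an independent uniform value from a finite
nonempty S ⊆ F (sample space Ω = S^{dead variables}).  Then with probability at least
1 − 2^k·d/|S|: every nonempty-subset sum (Σ_{i∈U} T_i)|_σ is nonzero, and each restricted gate
T_i|_σ is a nonzero scalar times a product of nonzero linear forms in the blocks X_j, j ∈ J
(so C|_σ is a nonzero minimal set-multilinear ΣΠΣ(k) circuit w.r.t. ⊔_{j∈J} X_j). -/
theorem stmt_17 {F : Type*} [Field F] {d k : ℕ} (hd : 1 ≤ d) (hk : 1 ≤ k)
    {n : Fin d → ℕ}
    (c : Fin k → (j : Fin d) → Fin (n j) → F) (hc : ∀ i j, c i j ≠ 0)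
    (T : Fin k → MvPolynomial ((j : Fin d) × Fin (n j)) F)
    (hT : ∀ i, T i = ∏ j : Fin d, ∑ t : Fin (n j), C (c i j t) * X ⟨j, t⟩)
    (hmin : ∀ U : Finset (Fin k), U.Nonempty → (∑ i ∈ U, T i) ≠ 0)
    (J : Finset (Fin d)) (S : Finset F) (hS : S.Nonempty) :
    (1 : ℝ) - ((2 ^ k * d : ℕ) : ℝ) / (S.card : ℝ) ≤
      (((Fintype.piFinset
            fun _ : {x : (j : Fin d) × Fin (n j) // x.1 ∉ J} => S).filter
          (fun σ : {x : (j : Fin d) × Fin (n j) // x.1 ∉ J} → F =>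
            (∀ U : Finset (Fin k), U.Nonempty →
              aeval (fun x : (j : Fin d) × Fin (n j) =>
                  if h : x.1 ∈ J then (X x : MvPolynomial ((j : Fin d) × Fin (n j)) F)
                  else C (σ ⟨x, h⟩)) (∑ i ∈ U, T i) ≠ 0) ∧
            ∀ i : Fin k, ∃ (b : F) (c' : (j : Fin d) → Fin (n j) → F),
              b ≠ 0 ∧ (∀ j ∈ J, c' j ≠ 0) ∧
              aeval (fun x : (j : Fin d) × Fin (n j) =>
                  if h : x.1 ∈ J then (X x : MvPolynomial ((j : Fin d) × Fin (n j)) F)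
                  else C (σ ⟨x, h⟩)) (T i)
                = C b * ∏ j ∈ J, ∑ t : Fin (n j), C (c' j t) * X ⟨j, t⟩)).card : ℝ)
        / ((Fintype.piFinset
              fun _ : {x : (j : Fin d) × Fin (n j) // x.1 ∉ J} => S).card : ℝ) := by
  set res : ({x : (j : Fin d) × Fin (n j) // x.1 ∉ J} → F) →
      (MvPolynomial ((j : Fin d) × Fin (n j)) F →ₐ[F] MvPolynomial ((j : Fin d) × Fin (n j)) F) :=
    fun σ => aeval (fun x : (j : Fin d) × Fin (n j) =>
      if h : x.1 ∈ J then (X x : MvPolynomial ((j : Fin d) × Fin (n j)) F)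
      else C (σ ⟨x, h⟩)) with hres
  set Ω := Fintype.piFinset fun _ : {x : (j : Fin d) × Fin (n j) // x.1 ∉ J} => S with hΩ
  have hSpos : (0 : ℝ) < S.card := by exact_mod_cast hS.card_pos
  have hΩpos : (0 : ℝ) < Ω.card := by
    rw [hΩ, Fintype.card_piFinset, Finset.prod_const]; push_cast; positivity
  -- the polynomial in the dead variables, with coefficients polynomials in the alive ones
  let lft : MvPolynomial ((j : Fin d) × Fin (n j)) F →ₐ[F]
      MvPolynomial {x : (j : Fin d) × Fin (n j) // x.1 ∉ J}
        (MvPolynomial ((j : Fin d) × Fin (n j)) F) :=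
    aeval (fun x => if h : x.1 ∈ J then C (X x) else X ⟨x, h⟩)
  have hev : ∀ σ P, eval (fun x => C (σ x)) (lft P) = res σ P := by
    intro σ P
    have : ((aeval (fun x => (C (σ x) : MvPolynomial ((j : Fin d) × Fin (n j)) F)) :
        MvPolynomial {x : (j : Fin d) × Fin (n j) // x.1 ∉ J}
        (MvPolynomial ((j : Fin d) × Fin (n j)) F) →ₐ[MvPolynomial ((j : Fin d) × Fin (n j)) F]
          MvPolynomial ((j : Fin d) × Fin (n j)) F).restrictScalars F).comp lft = res σ := by
      apply MvPolynomial.algHom_ext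
      intro x
      by_cases h : x.1 ∈ J <;> simp [lft, hres, h]
    rw [← this]
    simp [aeval_eq_eval]
  have hinj : ∀ P, P ≠ 0 → lft P ≠ 0 := by
    intro P hP h0
    apply hP
    have : ((aeval (fun x => (X x.1 : MvPolynomial ((j : Fin d) × Fin (n j)) F)) :
        MvPolynomial {x : (j : Fin d) × Fin (n j) // x.1 ∉ J}
        (MvPolynomial ((j : Fin d) × Fin (n j)) F) →ₐ[MvPolynomial ((j : Fin d) × Fin (n j)) F]
          MvPolynomial ((j : Fin d) × Fin (n j)) F).restrictScalars F).comp lft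
            = AlgHom.id F _ := by
      apply MvPolynomial.algHom_ext
      intro x
      by_cases h : x.1 ∈ J <;> simp [lft, h]
    have h2 := congrArg (fun f => f P) this
    simpa [h0] using h2.symm
  have hdeg : ∀ i, (lft (T i)).totalDegree ≤ d := by
    intro i
    rw [hT, map_prod]
    refine (totalDegree_finsetProd _ _).trans ?_
    refine (Finset.sum_le_card_nsmul _ _ 1 ?_).trans (by simp)
    intro j _
    rw [map_sum]
    refine totalDegree_finsetSum_le ?_
    intro t _
    rw [map_mul]
    refine (totalDegree_mul _ _).trans ?_
    have e1 : lft (C (c i j t)) = C (C (c i j t)) := by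
      have := lft.commutes (c i j t)
      simpa [MvPolynomial.algebraMap_eq] using this
    rw [e1, totalDegree_C, zero_add]
    by_cases h : j ∈ J <;> simp [lft, h]
  have hbad : ∀ U : Finset (Fin k), U.Nonempty →
      ((Ω.filter fun σ => res σ (∑ i ∈ U, T i) = 0).card : ℝ) ≤ (d : ℝ) / S.card * Ω.card := by
    intro U hU
    have := sz_aux (lft (∑ i ∈ U, T i)) (hinj _ (hmin U hU)) d
      (by rw [map_sum]; exact totalDegree_finsetSum_le fun i _ => hdeg i) S hS
      (fun a => (C a : MvPolynomial ((j : Fin d) × Fin (n j)) F)) (C_injective _ _)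
    simp only [hev] at this
    convert this
  have hgate : ∀ σ i, res σ (T i) ≠ 0 →
      ∃ (b : F) (c' : (j : Fin d) → Fin (n j) → F), b ≠ 0 ∧ (∀ j ∈ J, c' j ≠ 0) ∧
        res σ (T i) = C b * ∏ j ∈ J, ∑ t : Fin (n j), C (c' j t) * X ⟨j, t⟩ := by
    intro σ i hne
    have key : res σ (T i) = C (∏ j ∈ Jᶜ, ∑ t : Fin (n j),
        c i j t * (if h : j ∉ J then σ ⟨⟨j, t⟩, h⟩ else 0)) *
          ∏ j ∈ J, ∑ t : Fin (n j), C (c i j t) * X ⟨j, t⟩ := by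
      rw [hT, map_prod, ← Finset.prod_compl_mul_prod J, map_prod]
      congr 1
      · refine Finset.prod_congr rfl fun j hj => ?_
        have hj' : j ∉ J := by simpa using hj
        rw [map_sum, map_sum]
        refine Finset.sum_congr rfl fun t _ => ?_
        simp [hres, hj']
      · refine Finset.prod_congr rfl fun j hj => ?_
        rw [map_sum]
        refine Finset.sum_congr rfl fun t _ => ?_
        simp [hres, hj]
    refine ⟨_, c i, ?_, fun j _ => hc i j, key⟩
    intro h0
    apply hne
    rw [key, h0, C_0, zero_mul]
  have hcover : Ω ⊆ (Ω.filter fun σ => (∀ U : Finset (Fin k), U.Nonempty →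
        res σ (∑ i ∈ U, T i) ≠ 0) ∧ ∀ i : Fin k, ∃ (b : F) (c' : (j : Fin d) → Fin (n j) → F),
          b ≠ 0 ∧ (∀ j ∈ J, c' j ≠ 0) ∧
          res σ (T i) = C b * ∏ j ∈ J, ∑ t : Fin (n j), C (c' j t) * X ⟨j, t⟩) ∪
      ((Finset.univ : Finset (Finset (Fin k))).filter fun U => U.Nonempty).biUnion
        fun U => Ω.filter fun σ => res σ (∑ i ∈ U, T i) = 0 := by
    intro σ hσ
    by_cases h : ∀ U : Finset (Fin k), U.Nonempty → res σ (∑ i ∈ U, T i) ≠ 0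
    · refine Finset.mem_union_left _ (Finset.mem_filter.2 ⟨hσ, h, fun i => hgate σ i ?_⟩)
      simpa using h {i} (Finset.singleton_nonempty i)
    · push Not at h
      obtain ⟨U, hU, h0⟩ := h
      refine Finset.mem_union_right _ (Finset.mem_biUnion.2 ⟨U, by simpa using hU, ?_⟩)
      exact Finset.mem_filter.2 ⟨hσ, h0⟩
  have hcard := (Finset.card_le_card hcover).trans (Finset.card_union_le _ _)
  have hbad2 : ((((Finset.univ : Finset (Finset (Fin k))).filter fun U => U.Nonempty).biUnion
        fun U => Ω.filter fun σ => res σ (∑ i ∈ U, T i) = 0).card : ℝ) ≤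
        2 ^ k * ((d : ℝ) / S.card * Ω.card) := by
    refine le_trans (Nat.cast_le.2 Finset.card_biUnion_le) ?_
    push_cast
    refine (Finset.sum_le_card_nsmul _ _ ((d : ℝ) / S.card * Ω.card) ?_).trans ?_
    · intro U hU
      exact hbad U (Finset.mem_filter.1 hU).2
    · rw [nsmul_eq_mul]
      refine mul_le_mul_of_nonneg_right ?_ (by positivity)
      have : ((Finset.univ : Finset (Finset (Fin k))).filter fun U => U.Nonempty).card ≤ 2 ^ k :=
        (Finset.card_filter_le _ _).trans (by simp)
      exact_mod_cast this
  have hcard' := (Nat.cast_le (α := ℝ)).2 hcard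
  rw [Nat.cast_add] at hcard'
  rw [le_div_iff₀ hΩpos]
  have e : (1 - ((2 ^ k * d : ℕ) : ℝ) / (S.card : ℝ)) * (Ω.card : ℝ) =
      Ω.card - 2 ^ k * ((d : ℝ) / S.card * Ω.card) := by
    push_cast; ring
  rw [e]
  linarith
end
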